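/- Let k be a field and A a finite-dimensional k-algebra such that A/rad(A) is a separable k-algebra. If the outer automorphism group Out(A) = Aut_k(A)/Inn(A) is finite, then the trivial extension algebra T(A) is periodic if and only if it is twisted periodic. -/

import Mathlib

open TensorProduct

/-- There is an exact sequence `0 → M → P_n → ⋯ → P_1 → N → 0` of `R`-modules
(so with `n` middle terms) in which each middle term `P_i` is projective. -/
def HasProjExactSeq (R : Type) [Ring R] (M N : ModuleCat R) (n : ℕ) : Prop :=
  ∃ (P : ℕ → ModuleCat R) (d : ∀ i, P (i + 1) →ₗ[R] P i)
    (_ : (P 0 : Type) ≃ₗ[R] N) (_ : (M : Type) ≃ₗ[R] P (n + 1)),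
    (∀ i, 1 ≤ i → i ≤ n → Module.Projective R (P i)) ∧
    Function.Surjective (d 0) ∧ Function.Injective (d n) ∧
    ∀ i < n, LinearMap.range (d (i + 1)) = LinearMap.ker (d i)

/-- The regular bimodule `B` as a module over the enveloping algebra `B ⊗[k] Bᵐᵒᵖ`. -/
noncomputable def regularBimodule (k B : Type) [Field k] [Ring B] [Algebra k B] :
    ModuleCat (B ⊗[k] Bᵐᵒᵖ) :=
  letI : Module (B ⊗[k] Bᵐᵒᵖ) B := TensorProduct.Algebra.module
  ModuleCat.of _ B

/-- The twisted bimodule `₁B_φ` (underlying set `B`, right action twisted by `φ`,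
i.e. `a • x • b = a * x * φ b`) as a module over the enveloping algebra `B ⊗[k] Bᵐᵒᵖ`. -/
noncomputable def twistedBimodule (k B : Type) [Field k] [Ring B] [Algebra k B]
    (φ : B ≃ₐ[k] B) : ModuleCat (B ⊗[k] Bᵐᵒᵖ) :=
  letI : Module (B ⊗[k] Bᵐᵒᵖ) B := TensorProduct.Algebra.module
  letI : Module (B ⊗[k] Bᵐᵒᵖ) B :=
    Module.compHom B
      (Algebra.TensorProduct.map (AlgHom.id k B) (AlgEquiv.op φ).toAlgHom).toRingHom
  ModuleCat.of _ B

/-- A finite-dimensional `k`-algebra `B` is periodic if there are `n ≥ 1` and an exact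
sequence `0 → B → P_{n-1} → ⋯ → P_0 → B → 0` of `B`-`B`-bimodules (modules over the
enveloping algebra `B ⊗[k] Bᵐᵒᵖ`) with all `P_i` projective. -/
noncomputable def IsPeriodicAlgebra (k B : Type) [Field k] [Ring B] [Algebra k B] : Prop :=
  ∃ n : ℕ, 1 ≤ n ∧ HasProjExactSeq (B ⊗[k] Bᵐᵒᵖ) (regularBimodule k B) (regularBimodule k B) n

/-- A finite-dimensional `k`-algebra `B` is twisted periodic if there are `n ≥ 1`, an algebra
automorphism `φ` of `B`, and an exact sequence `0 → ₁B_φ → P_{n-1} → ⋯ → P_0 → B → 0` of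
bimodules with all `P_i` projective over `B ⊗[k] Bᵐᵒᵖ`. -/
noncomputable def IsTwistedPeriodicAlgebra (k B : Type) [Field k] [Ring B] [Algebra k B] : Prop :=
  ∃ (n : ℕ) (φ : B ≃ₐ[k] B), 1 ≤ n ∧
    HasProjExactSeq (B ⊗[k] Bᵐᵒᵖ) (twistedBimodule k B φ) (regularBimodule k B) n

section DualBimodule

variable (k A : Type) [Field k] [Ring A] [Algebra k A]

/-- The left `A`-action on `D(A) = Hom_k(A, k)`, given by `(a • f) x = f (x * a)`. -/
noncomputable instance Module.Dual.leftModule : Module A (Module.Dual k A) where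
  smul a f := f ∘ₗ LinearMap.mulRight k a
  one_smul f := LinearMap.ext fun x => by show f (x * 1) = f x; rw [mul_one]
  mul_smul a b f := LinearMap.ext fun x => by
    show f (x * (a * b)) = f (x * a * b); rw [mul_assoc]
  smul_zero a := LinearMap.ext fun x => by show (0 : Module.Dual k A) (x * a) = 0; rfl
  smul_add a f g := LinearMap.ext fun x => by
    show (f + g) (x * a) = f (x * a) + g (x * a); rfl
  add_smul a b f := LinearMap.ext fun x => by
    show f (x * (a + b)) = f (x * a) + f (x * b); rw [mul_add, map_add]
  zero_smul f := LinearMap.ext fun x => by show f (x * 0) = 0; rw [mul_zero, map_zero]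

/-- The right `A`-action on `D(A) = Hom_k(A, k)`, given by `(f • op b) x = f (b * x)`. -/
noncomputable instance Module.Dual.rightModule : Module Aᵐᵒᵖ (Module.Dual k A) where
  smul b f := f ∘ₗ LinearMap.mulLeft k b.unop
  one_smul f := LinearMap.ext fun x => by show f (1 * x) = f x; rw [one_mul]
  mul_smul a b f := LinearMap.ext fun x => by
    show f ((a * b).unop * x) = f (b.unop * (a.unop * x))
    rw [MulOpposite.unop_mul, mul_assoc]
  smul_zero a := LinearMap.ext fun x => by show (0 : Module.Dual k A) (a.unop * x) = 0; rfl
  smul_add a f g := LinearMap.ext fun x => by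
    show (f + g) (a.unop * x) = f (a.unop * x) + g (a.unop * x); rfl
  add_smul a b f := LinearMap.ext fun x => by
    show f ((a + b).unop * x) = f (a.unop * x) + f (b.unop * x)
    rw [MulOpposite.unop_add, add_mul, map_add]
  zero_smul f := LinearMap.ext fun x => by
    show f ((0 : Aᵐᵒᵖ).unop * x) = 0
    rw [MulOpposite.unop_zero, zero_mul, map_zero]

instance : SMulCommClass A Aᵐᵒᵖ (Module.Dual k A) where
  smul_comm a b f := LinearMap.ext fun x => by
    show f (b.unop * (x * a)) = f (b.unop * x * a); rw [mul_assoc]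

instance : IsScalarTower k A (Module.Dual k A) where
  smul_assoc c a f := LinearMap.ext fun x => by
    show f (x * (c • a)) = c • f (x * a)
    rw [mul_smul_comm, map_smul]

instance : IsScalarTower k Aᵐᵒᵖ (Module.Dual k A) where
  smul_assoc c b f := LinearMap.ext fun x => by
    show f ((c • b).unop * x) = c • f (b.unop * x)
    rw [MulOpposite.unop_smul, smul_mul_assoc, map_smul]

/-- The trivial extension algebra `T(A) = A ⊕ D(A)`. -/
noncomputable abbrev TrivialExtension : Type := TrivSqZeroExt A (Module.Dual k A)


end DualBimodule

namespace TE

structure TMod (k T : Type) [Field k] [Ring T] [Algebra k T] where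
  carrier : Type
  [acg : AddCommGroup carrier]
  [modk : Module k carrier]
  [modT : Module T carrier]
  [tower : IsScalarTower k T carrier]

instance (k T : Type) [Field k] [Ring T] [Algebra k T] : CoeSort (TMod k T) Type := ⟨TMod.carrier⟩

attribute [instance] TMod.acg TMod.modk TMod.modT TMod.tower

section
variable {k T : Type} [Field k] [Ring T] [Algebra k T]

instance tmod_scc (M : TMod k T) : SMulCommClass k T M := IsScalarTower.to_smulCommClass
instance tmod_scc' (M : TMod k T) : SMulCommClass T k M := SMulCommClass.symm _ _ _

/-- `f` is semilinear along `σ`. -/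
def IsSL (σ : T →ₐ[k] T) {M N : TMod k T} (f : M →ₗ[k] N) : Prop :=
  ∀ (t : T) (x : M), f (t • x) = σ t • f x

abbrev idT : T →ₐ[k] T := AlgHom.id k T

section SL
variable {M N L : TMod k T} {σ τ : T →ₐ[k] T}

theorem IsSL.comp {g : N →ₗ[k] L} {f : M →ₗ[k] N} (hg : IsSL τ g) (hf : IsSL σ f) :
    IsSL (τ.comp σ) (g ∘ₗ f) := fun t x => by simp [hf t x, hg _ _]

theorem IsSL.comp_id {g : N →ₗ[k] L} {f : M →ₗ[k] N} (hg : IsSL σ g) (hf : IsSL idT f) :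
    IsSL σ (g ∘ₗ f) := hg.comp hf

theorem IsSL.id_comp {g : N →ₗ[k] L} {f : M →ₗ[k] N} (hg : IsSL idT g) (hf : IsSL σ f) :
    IsSL σ (g ∘ₗ f) := hg.comp hf

theorem IsSL.add {f g : M →ₗ[k] N} (hf : IsSL σ f) (hg : IsSL σ g) : IsSL σ (f + g) :=
  fun t x => by simp [hf t x, hg t x]

theorem IsSL.sub {f g : M →ₗ[k] N} (hf : IsSL σ f) (hg : IsSL σ g) : IsSL σ (f - g) :=
  fun t x => by simp [hf t x, hg t x, smul_sub]

theorem IsSL.smul {f : M →ₗ[k] N} (hf : IsSL σ f) (u : k) : IsSL σ (u • f) :=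
  fun t x => by simp [hf t x, smul_comm u]

theorem IsSL.id : IsSL idT (LinearMap.id : M →ₗ[k] M) := fun _ _ => rfl

/-- Convert to a `T`-linear map. -/
def IsSL.toT {f : M →ₗ[k] N} (hf : IsSL idT f) : M →ₗ[T] N :=
  { toFun := f, map_add' := f.map_add, map_smul' := hf }

@[simp] theorem IsSL.toT_apply {f : M →ₗ[k] N} (hf : IsSL idT f) (x : M) : hf.toT x = f x := rfl

/-- Convert from a `T`-linear map. -/
def ofT (f : M →ₗ[T] N) : M →ₗ[k] N := f.restrictScalars k

@[simp] theorem ofT_apply (f : M →ₗ[T] N) (x : M) : (ofT f : M →ₗ[k] N) x = f x := rfl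

theorem isSL_ofT (f : M →ₗ[T] N) : IsSL idT (ofT f : M →ₗ[k] N) := fun t x => f.map_smul t x

end SL

/-- free module -/
def B (M : TMod k T) : TMod k T := { carrier := T ⊗[k] M }

instance projB (M : TMod k T) : Module.Projective T (B M) :=
  inferInstanceAs (Module.Projective T (T ⊗[k] M))

def mk (M : TMod k T) : T →ₗ[k] M →ₗ[k] B M := TensorProduct.mk k T M

theorem B_ext {M N : TMod k T} {f g : B M →ₗ[k] N} (h : ∀ t x, f (mk M t x) = g (mk M t x)) :
    f = g := TensorProduct.ext' h

theorem B_ind {M : TMod k T} {P : B M → Prop} (b : B M) (h0 : P 0) (h1 : ∀ t x, P (mk M t x))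
    (h2 : ∀ a b, P a → P b → P (a + b)) : P b := TensorProduct.induction_on b h0 h1 h2

theorem smul_mk (M : TMod k T) (s t : T) (x : M) : s • mk M t x = mk M (s * t) x := by
  change s • (t ⊗ₜ[k] x) = (s * t) ⊗ₜ[k] x
  rw [TensorProduct.smul_tmul', smul_eq_mul]

def eps (M : TMod k T) : B M →ₗ[k] M :=
  TensorProduct.lift (Algebra.lsmul k k M).toLinearMap

@[simp] theorem eps_mk (M : TMod k T) (t : T) (x : M) : eps M (mk M t x) = t • x := rfl

theorem eps_sl (M : TMod k T) : IsSL idT (eps M) := fun t b => by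
  induction b using B_ind with
  | h0 => simp
  | h1 s x => rw [smul_mk]; simp [mul_smul]
  | h2 a b ha hb => rw [smul_add, map_add, map_add, ha, hb, smul_add]

def mapB (σ : T →ₗ[k] T) {M N : TMod k T} (f : M →ₗ[k] N) : B M →ₗ[k] B N :=
  TensorProduct.map σ f

@[simp] theorem mapB_mk (σ : T →ₗ[k] T) {M N : TMod k T} (f : M →ₗ[k] N) (t : T) (x : M) :
    mapB σ f (mk M t x) = mk N (σ t) (f x) := rfl

theorem mapB_comp (σ τ : T →ₗ[k] T) {M N L : TMod k T} (g : N →ₗ[k] L) (f : M →ₗ[k] N) :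
    mapB τ g ∘ₗ mapB σ f = mapB (τ ∘ₗ σ) (g ∘ₗ f) := B_ext fun t x => by simp

theorem mapB_comp_apply (σ τ : T →ₗ[k] T) {M N L : TMod k T} (g : N →ₗ[k] L) (f : M →ₗ[k] N)
    (b : B M) : mapB τ g (mapB σ f b) = mapB (τ ∘ₗ σ) (g ∘ₗ f) b :=
  LinearMap.congr_fun (mapB_comp σ τ g f) b

theorem mapB_add (σ : T →ₗ[k] T) {M N : TMod k T} (f g : M →ₗ[k] N) :
    mapB σ (f + g) = mapB σ f + mapB σ g := B_ext fun t x => by simp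

theorem mapB_sub (σ : T →ₗ[k] T) {M N : TMod k T} (f g : M →ₗ[k] N) :
    mapB σ (f - g) = mapB σ f - mapB σ g := B_ext fun t x => by simp

theorem mapB_smul (σ : T →ₗ[k] T) {M N : TMod k T} (u : k) (f : M →ₗ[k] N) :
    mapB σ (u • f) = u • mapB σ f := B_ext fun t x => by simp

theorem mapB_zero (σ : T →ₗ[k] T) {M N : TMod k T} :
    mapB σ (0 : M →ₗ[k] N) = 0 := B_ext fun t x => by simp

theorem mapB_zero_left {M N : TMod k T} (f : M →ₗ[k] N) :
    mapB (0 : T →ₗ[k] T) f = 0 := B_ext fun t x => by simp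

theorem mapB_id {M : TMod k T} : mapB LinearMap.id (LinearMap.id : M →ₗ[k] M) = LinearMap.id :=
  B_ext fun t x => by simp

theorem mapB_sl (σ : T →ₐ[k] T) {M N : TMod k T} (f : M →ₗ[k] N) :
    IsSL σ (mapB σ.toLinearMap f) := fun t b => by
  induction b using B_ind with
  | h0 => simp
  | h1 s x => rw [smul_mk, mapB_mk, mapB_mk, smul_mk]; simp
  | h2 a b ha hb => rw [smul_add, map_add, map_add, ha, hb, smul_add]

theorem eps_mapB {σ : T →ₐ[k] T} {M N : TMod k T} {f : M →ₗ[k] N} (hf : IsSL σ f) (b : B M) :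
    eps N (mapB σ.toLinearMap f b) = f (eps M b) := by
  induction b using B_ind with
  | h0 => simp
  | h1 s x => simp [hf s x]
  | h2 a b ha hb => rw [map_add, map_add, map_add, map_add, ha, hb]

/-- kernel of the multiplication -/
def K (M : TMod k T) : TMod k T := { carrier := LinearMap.ker (eps_sl M).toT }

def incl (M : TMod k T) : K M →ₗ[k] B M :=
  ofT (M := K M) (N := B M) (LinearMap.ker (eps_sl M).toT).subtype

theorem incl_sl (M : TMod k T) : IsSL idT (incl M) := isSL_ofT _

theorem incl_inj (M : TMod k T) : Function.Injective (incl M) := Subtype.val_injective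

@[simp] theorem eps_incl (M : TMod k T) (x : K M) : eps M (incl M x) = 0 := x.2

def lft {M : TMod k T} (b : B M) (h : eps M b = 0) : K M := ⟨b, h⟩

@[simp] theorem incl_lft {M : TMod k T} (b : B M) (h : eps M b = 0) : incl M (lft b h) = b := rfl

/-- projection to the kernel -/
def pr (M : TMod k T) : B M →ₗ[k] K M where
  toFun b := lft (b - mk M 1 (eps M b)) (by simp)
  map_add' a b := incl_inj M (by simp only [incl_lft, map_add]; abel)
  map_smul' u b := incl_inj M (by simp only [incl_lft, map_smul, smul_sub, RingHom.id_apply])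

theorem incl_pr (M : TMod k T) (b : B M) : incl M (pr M b) = b - mk M 1 (eps M b) := rfl

theorem incl_pr_of {M : TMod k T} {b : B M} (h : eps M b = 0) : incl M (pr M b) = b := by
  rw [incl_pr, h]; simp

@[simp] theorem pr_incl (M : TMod k T) (x : K M) : pr M (incl M x) = x :=
  incl_inj M (incl_pr_of (eps_incl M x))

/-- coordinates -/
def co {M : TMod k T} (l : M →ₗ[k] k) : B M →ₗ[k] T :=
  (TensorProduct.rid k T).toLinearMap ∘ₗ TensorProduct.map LinearMap.id l

theorem co_mk {M : TMod k T} (l : M →ₗ[k] k) (t : T) (x : M) : co l (mk M t x) = l x • t := rfl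

theorem co_inj_aux {M : Type} [AddCommGroup M] [Module k M] (b : T ⊗[k] M)
    (h : ∀ l : M →ₗ[k] k,
      (TensorProduct.rid k T) (TensorProduct.map LinearMap.id l b) = 0) : b = 0 := by
  classical
  let bs := Module.Basis.ofVectorSpace k M
  have key : ∀ (b : T ⊗[k] M) i, TensorProduct.equivFinsuppOfBasisRight (M := T) bs b i
      = (TensorProduct.rid k T) (TensorProduct.map LinearMap.id (bs.coord i) b) := by
    intro b i
    induction b using TensorProduct.induction_on with
    | zero => simp
    | tmul t x =>
      rw [TensorProduct.equivFinsuppOfBasisRight_apply_tmul_apply]; rfl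
    | add a b ha hb => rw [map_add, map_add, map_add, Finsupp.add_apply, ha, hb]
  refine (TensorProduct.equivFinsuppOfBasisRight (M := T) bs).injective ?_
  rw [map_zero]
  refine Finsupp.ext fun i => ?_
  rw [key, h]; rfl

theorem co_inj {M : TMod k T} (b : B M) (h : ∀ l : M →ₗ[k] k, co l b = 0) : b = 0 :=
  co_inj_aux (M := M) b h

attribute [irreducible] B K mk incl pr eps mapB lft co

def Kmap (σ : T →ₗ[k] T) {M N : TMod k T} (f : M →ₗ[k] N) : K M →ₗ[k] K N :=
  pr N ∘ₗ mapB σ f ∘ₗ incl M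

theorem incl_Kmap {σ : T →ₐ[k] T} {M N : TMod k T} {f : M →ₗ[k] N} (hf : IsSL σ f) (x : K M) :
    incl N (Kmap σ.toLinearMap f x) = mapB σ.toLinearMap f (incl M x) :=
  incl_pr_of (by rw [LinearMap.comp_apply, eps_mapB hf]; simp)

theorem Kmap_sl {σ : T →ₐ[k] T} {M N : TMod k T} {f : M →ₗ[k] N} (hf : IsSL σ f) :
    IsSL σ (Kmap σ.toLinearMap f) := fun t x => incl_inj N (by
  rw [incl_Kmap hf, incl_sl, mapB_sl σ f, incl_sl, incl_Kmap hf]; rfl)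

theorem Kmap_comp {σ τ : T →ₐ[k] T} {M N L : TMod k T} {f : M →ₗ[k] N} (hf : IsSL σ f)
    (g : N →ₗ[k] L) :
    Kmap τ.toLinearMap g ∘ₗ Kmap σ.toLinearMap f = Kmap (τ.comp σ).toLinearMap (g ∘ₗ f) :=
  LinearMap.ext fun x => by
    change pr L (mapB _ g (incl N (Kmap _ f x))) = pr L (mapB _ _ (incl M x))
    rw [incl_Kmap hf, mapB_comp_apply]; rfl

theorem Kmap_add (σ : T →ₗ[k] T) {M N : TMod k T} (f g : M →ₗ[k] N) :
    Kmap σ (f + g) = Kmap σ f + Kmap σ g := LinearMap.ext fun x => by simp [Kmap, mapB_add]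

theorem Kmap_sub (σ : T →ₗ[k] T) {M N : TMod k T} (f g : M →ₗ[k] N) :
    Kmap σ (f - g) = Kmap σ f - Kmap σ g := LinearMap.ext fun x => by simp [Kmap, mapB_sub]

theorem Kmap_smul (σ : T →ₗ[k] T) {M N : TMod k T} (u : k) (f : M →ₗ[k] N) :
    Kmap σ (u • f) = u • Kmap σ f := LinearMap.ext fun x => by simp [Kmap, mapB_smul]

theorem Kmap_id {M : TMod k T} :
    Kmap (idT (k := k) (T := T)).toLinearMap (LinearMap.id : M →ₗ[k] M) = LinearMap.id :=
  LinearMap.ext fun x => by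
    have : (idT (k := k) (T := T)).toLinearMap = LinearMap.id := rfl
    simp [Kmap, this, mapB_id]

/-- iterated kernels -/
def KK : ℕ → TMod k T → TMod k T
  | 0, M => M
  | n + 1, M => K (KK n M)

def Kn (σ : T →ₗ[k] T) {M N : TMod k T} (f : M →ₗ[k] N) : ∀ n : ℕ, KK n M →ₗ[k] KK n N
  | 0 => f
  | n + 1 => Kmap σ (Kn σ f n)

theorem Kn_sl {σ : T →ₐ[k] T} {M N : TMod k T} {f : M →ₗ[k] N} (hf : IsSL σ f) :
    ∀ n, IsSL σ (Kn σ.toLinearMap f n)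
  | 0 => hf
  | n + 1 => Kmap_sl (Kn_sl hf n)

theorem Kn_comp {σ τ : T →ₐ[k] T} {M N L : TMod k T} {f : M →ₗ[k] N} (hf : IsSL σ f)
    (g : N →ₗ[k] L) : ∀ n,
    Kn τ.toLinearMap g n ∘ₗ Kn σ.toLinearMap f n = Kn (τ.comp σ).toLinearMap (g ∘ₗ f) n
  | 0 => rfl
  | n + 1 => by
    change Kmap _ _ ∘ₗ Kmap _ _ = Kmap _ _
    rw [Kmap_comp (Kn_sl hf n), Kn_comp hf g n]

theorem Kn_id {M : TMod k T} : ∀ n,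
    Kn (idT (k := k) (T := T)).toLinearMap (LinearMap.id : M →ₗ[k] M) n = LinearMap.id
  | 0 => rfl
  | n + 1 => by
    change Kmap _ _ = _
    rw [Kn_id n]; exact Kmap_id

theorem proj_K (Q : TMod k T) [Module.Projective T Q] : Module.Projective T (K Q) := by
  obtain ⟨j, hj⟩ := Module.projective_lifting_property (eps_sl Q).toT (LinearMap.id : Q →ₗ[T] Q)
    (fun x => ⟨mk Q 1 x, by simp⟩)
  have hj' : ∀ x, eps Q (j x) = x := fun x => LinearMap.congr_fun hj x
  let r : B Q →ₗ[T] K Q :=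
    { toFun := fun b => pr Q (b - j (eps Q b))
      map_add' := fun a b => by rw [← map_add, map_add (eps Q), map_add j]; congr 1; abel
      map_smul' := fun t b => incl_inj Q (by
        have h : ∀ b, eps Q (b - j (eps Q b)) = 0 := fun b => by rw [map_sub, hj', sub_self]
        rw [RingHom.id_apply, incl_sl, incl_pr_of (h _), incl_pr_of (h _), eps_sl]
        simp [smul_sub]) }
  refine Module.Projective.of_split (incl_sl Q).toT r (LinearMap.ext fun x => ?_)
  simp [r]

theorem proj_KK (Q : TMod k T) [h : Module.Projective T Q] : ∀ n, Module.Projective T (KK n Q)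
  | 0 => h
  | n + 1 => by
    have := proj_KK Q n
    exact proj_K (KK n Q)

def Triv (σ : T →ₐ[k] T) {M N : TMod k T} (a : M →ₗ[k] N) : Prop :=
  ∃ (Q : TMod k T) (r : M →ₗ[k] Q) (s : Q →ₗ[k] N),
    Module.Projective T Q ∧ IsSL idT r ∧ IsSL σ s ∧ a = s ∘ₗ r

section Triv
variable {M N L : TMod k T} {σ τ : T →ₐ[k] T}

theorem Triv.of_proj {f : M →ₗ[k] N} [h : Module.Projective T M] (hf : IsSL σ f) : Triv σ f :=
  ⟨M, LinearMap.id, f, h, IsSL.id, hf, rfl⟩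

theorem Triv.congr {a b : M →ₗ[k] N} (ha : Triv σ a) (h : b = a) : Triv σ b := h ▸ ha

theorem Triv.add {a b : M →ₗ[k] N} (ha : Triv σ a) (hb : Triv σ b) : Triv σ (a + b) := by
  obtain ⟨Q, r, s, hQ, hr, hs, rfl⟩ := ha
  obtain ⟨Q', r', s', hQ', hr', hs', rfl⟩ := hb
  refine ⟨{ carrier := Q × Q' }, r.prod r', s.coprod s', ?_, ?_, ?_, ?_⟩
  · exact inferInstanceAs (Module.Projective T (Q × Q'))
  · intro t x; exact Prod.ext (hr t x) (hr' t x)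
  · rintro t ⟨x, y⟩
    change s (t • x) + s' (t • y) = σ t • (s x + s' y)
    rw [hs, hs', smul_add]
  · ext x; rfl

theorem Triv.smul {a : M →ₗ[k] N} (ha : Triv σ a) (u : k) : Triv σ (u • a) := by
  obtain ⟨Q, r, s, hQ, hr, hs, rfl⟩ := ha
  exact ⟨Q, r, u • s, hQ, hr, hs.smul u, rfl⟩

theorem Triv.sub {a b : M →ₗ[k] N} (ha : Triv σ a) (hb : Triv σ b) : Triv σ (a - b) := by
  have := ha.add (hb.smul (-1)); rwa [neg_one_smul, ← sub_eq_add_neg] at this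

theorem Triv.comp_right {a : N →ₗ[k] L} (ha : Triv σ a) {f : M →ₗ[k] N} (hf : IsSL idT f) :
    Triv σ (a ∘ₗ f) := by
  obtain ⟨Q, r, s, hQ, hr, hs, rfl⟩ := ha
  exact ⟨Q, r ∘ₗ f, s, hQ, hr.comp hf, hs, rfl⟩

theorem Triv.comp_left {a : M →ₗ[k] N} (ha : Triv σ a) {f : N →ₗ[k] L} (hf : IsSL τ f) :
    Triv (τ.comp σ) (f ∘ₗ a) := by
  obtain ⟨Q, r, s, hQ, hr, hs, rfl⟩ := ha
  exact ⟨Q, r, f ∘ₗ s, hQ, hr, hf.comp hs, rfl⟩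

theorem Triv.map {a : M →ₗ[k] N} (ha : Triv σ a) : Triv σ (Kmap σ.toLinearMap a) := by
  obtain ⟨Q, r, s, hQ, hr, hs, rfl⟩ := ha
  exact ⟨K Q, Kmap idT.toLinearMap r, Kmap σ.toLinearMap s, proj_K Q, Kmap_sl hr, Kmap_sl hs,
    (Kmap_comp hr s).symm⟩

end Triv

section Cast

def castL {M N : TMod k T} (h : M = N) : M →ₗ[k] N := h ▸ LinearMap.id

theorem castL_sl {M N : TMod k T} (h : M = N) : IsSL idT (castL h) := by subst h; exact IsSL.id

theorem castL_rfl {M : TMod k T} (h : M = M) : castL h = LinearMap.id := rfl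

theorem castL_comp {M N L : TMod k T} (h : M = N) (h' : N = L) :
    castL h' ∘ₗ castL h = castL (h.trans h') := by subst h; subst h'; rfl

theorem Kmap_castL {M N : TMod k T} (h : M = N) :
    Kmap (idT (k := k) (T := T)).toLinearMap (castL h) = castL (congrArg K h) := by
  subst h; exact Kmap_id

theorem KK_K (n : ℕ) (N : TMod k T) : KK n (K N) = K (KK n N) := by
  induction n with
  | zero => rfl
  | succ n ih => exact congrArg K ih

theorem KK_KK (n m : ℕ) (N : TMod k T) : KK n (KK m N) = KK m (KK n N) := by
  induction m with
  | zero => rfl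
  | succ m ih => exact (KK_K n (KK m N)).trans (congrArg K ih)

end Cast

section Snat

def S1 (M : TMod k T) : K (B M) →ₗ[k] B (K M) :=
  (-1 : k) • (mapB (idT (k := k) (T := T)).toLinearMap (pr M) ∘ₗ incl (B M))

theorem S1_sl (M : TMod k T) : IsSL idT (S1 M) :=
  ((mapB_sl idT (pr M)).comp (incl_sl (B M))).smul (-1)

theorem eps_S1 (M : TMod k T) : eps (K M) ∘ₗ S1 M = Kmap idT.toLinearMap (eps M) := by
  refine LinearMap.ext fun x => incl_inj M ?_
  rw [incl_Kmap (eps_sl M)]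
  have key : ∀ b : B (B M), incl M (eps (K M) (mapB (idT (k := k) (T := T)).toLinearMap (pr M) b))
      = eps (B M) b - mapB (idT (k := k) (T := T)).toLinearMap (eps M) b := by
    intro b
    induction b using B_ind with
    | h0 => simp
    | h1 t y =>
      rw [mapB_mk, eps_mk, incl_sl, incl_pr, mapB_mk, eps_mk, smul_sub]
      change t • y - t • _ = _
      rw [smul_mk]; simp
    | h2 a b ha hb => simp only [map_add, ha, hb]; abel
  simp only [S1, LinearMap.comp_apply, LinearMap.smul_apply, map_smul, key, eps_incl]
  simp

theorem S1_incl (M : TMod k T) :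
    S1 M ∘ₗ Kmap idT.toLinearMap (incl M) = (-1 : k) • incl (K M) := by
  refine LinearMap.ext fun x => ?_
  simp only [S1, LinearMap.comp_apply, LinearMap.smul_apply, incl_Kmap (incl_sl M),
    mapB_comp_apply]
  have h : pr M ∘ₗ incl M = LinearMap.id := LinearMap.ext fun x => pr_incl M x
  have h2 : (idT (k := k) (T := T)).toLinearMap ∘ₗ (idT (k := k) (T := T)).toLinearMap
    = LinearMap.id := rfl
  rw [h, h2, mapB_id]; rfl

def Sn (N : TMod k T) : ∀ n : ℕ, KK n (B N) →ₗ[k] B (KK n N)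
  | 0 => LinearMap.id
  | n + 1 => S1 (KK n N) ∘ₗ Kmap (idT (k := k) (T := T)).toLinearMap (Sn N n)

theorem Sn_sl (N : TMod k T) : ∀ n, IsSL idT (Sn N n)
  | 0 => IsSL.id
  | n + 1 => (S1_sl _).comp (Kmap_sl (Sn_sl N n))

theorem eps_Sn (N : TMod k T) : ∀ n, eps (KK n N) ∘ₗ Sn N n = Kn idT.toLinearMap (eps N) n
  | 0 => rfl
  | n + 1 => by
    change eps (K (KK n N)) ∘ₗ (S1 (KK n N) ∘ₗ Kmap _ (Sn N n)) = Kmap _ _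
    rw [← LinearMap.comp_assoc, eps_S1, Kmap_comp (Sn_sl N n), eps_Sn N n]; rfl

theorem Sn_incl (N : TMod k T) : ∀ n, Sn N n ∘ₗ Kn idT.toLinearMap (incl N) n
    = ((-1 : k) ^ n) • (incl (KK n N) ∘ₗ castL (KK_K n N))
  | 0 => by simp only [pow_zero, one_smul]; rfl
  | n + 1 => by
    change (S1 (KK n N) ∘ₗ Kmap _ (Sn N n)) ∘ₗ Kmap _ (Kn _ (incl N) n) = _
    rw [LinearMap.comp_assoc, Kmap_comp (Kn_sl (incl_sl N) n), Sn_incl N n, Kmap_smul,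
      LinearMap.comp_smul]
    have : Kmap ((idT (k := k) (T := T)).comp idT).toLinearMap
        (incl (KK n N) ∘ₗ castL (KK_K n N))
        = Kmap idT.toLinearMap (incl (KK n N)) ∘ₗ castL (congrArg K (KK_K n N)) := by
      rw [← Kmap_castL, Kmap_comp (castL_sl _)]
    rw [this, ← LinearMap.comp_assoc, S1_incl, LinearMap.smul_comp, smul_smul, pow_succ]
    rfl

end Snat

section Eta
variable {σ : T →ₐ[k] T} {n : ℕ} (η : ∀ N : TMod k T, KK n N →ₗ[k] N)

theorem eta_K (hη : ∀ N, IsSL σ (η N))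
    (nat : ∀ (M N : TMod k T) (f : M →ₗ[k] N), IsSL idT f →
      f ∘ₗ η M = η N ∘ₗ Kn idT.toLinearMap f n) (N : TMod k T) :
    Triv σ (η (K N) - ((-1 : k) ^ n) • (Kmap σ.toLinearMap (η N) ∘ₗ castL (KK_K n N))) := by
  let δ : KK n (B N) →ₗ[k] B N := η (B N) - mapB σ.toLinearMap (η N) ∘ₗ Sn N n
  have hδ : IsSL σ δ := (hη _).sub ((mapB_sl σ (η N)).comp (Sn_sl N n))
  have h0 : ∀ x, eps N (δ x) = 0 := by
    intro x
    have h1 := LinearMap.congr_fun (nat _ _ _ (eps_sl N)) x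
    have h2 := LinearMap.congr_fun (eps_Sn N n) x
    simp only [LinearMap.comp_apply] at h1 h2
    simp only [δ, LinearMap.sub_apply, LinearMap.comp_apply, map_sub, eps_mapB (hη N), h1, h2,
      sub_self]
  refine ⟨KK n (B N), Kn idT.toLinearMap (incl N) n, pr N ∘ₗ δ, proj_KK _ n,
    Kn_sl (incl_sl N) n, ?_, ?_⟩
  · intro t x
    refine incl_inj N ?_
    rw [incl_sl]
    simp only [LinearMap.comp_apply]
    rw [incl_pr_of (h0 _), incl_pr_of (h0 _), hδ]; rfl
  · refine LinearMap.ext fun x => incl_inj N ?_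
    simp only [LinearMap.comp_apply]
    rw [incl_pr_of (h0 _)]
    have h1 := LinearMap.congr_fun (nat _ _ _ (incl_sl N)) x
    have h2 := LinearMap.congr_fun (Sn_incl N n) x
    simp only [LinearMap.comp_apply, LinearMap.smul_apply] at h1 h2
    simp only [δ, LinearMap.sub_apply, LinearMap.comp_apply, map_sub, LinearMap.smul_apply,
      map_smul, h1, h2, incl_Kmap (hη N)]

theorem eta_KK (hη : ∀ N, IsSL σ (η N))
    (nat : ∀ (M N : TMod k T) (f : M →ₗ[k] N), IsSL idT f →
      f ∘ₗ η M = η N ∘ₗ Kn idT.toLinearMap f n) (N : TMod k T) (m : ℕ) :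
    Triv σ (η (KK m N) - (((-1 : k) ^ n) ^ m) •
      (Kn σ.toLinearMap (η N) m ∘ₗ castL (KK_KK n m N))) := by
  induction m with
  | zero =>
    have : η (KK 0 N) - (((-1 : k) ^ n) ^ 0) •
      (Kn σ.toLinearMap (η N) 0 ∘ₗ castL (KK_KK n 0 N)) = 0 := by
        simp only [pow_zero, one_smul]; exact sub_self (η N)
    rw [this]
    have : Module.Projective T (B N) := inferInstance
    exact ⟨B N, 0, 0, this, fun _ _ => by simp, fun _ _ => by simp, by simp⟩
  | succ m ih =>
    have h1 := eta_K η hη nat (KK m N)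
    have h2 := (ih.map.comp_right (castL_sl (KK_K n (KK m N)))).smul ((-1 : k) ^ n)
    have h3 := h1.add h2
    refine Triv.congr h3 ?_
    rw [Kmap_sub, Kmap_smul]
    have : Kmap σ.toLinearMap (Kn σ.toLinearMap (η N) m ∘ₗ castL (KK_KK n m N))
      = Kmap σ.toLinearMap (Kn σ.toLinearMap (η N) m) ∘ₗ castL (congrArg K (KK_KK n m N)) := by
      rw [← Kmap_castL, Kmap_comp (castL_sl _)]; rfl
    rw [this, LinearMap.sub_comp, LinearMap.smul_comp, LinearMap.comp_assoc, castL_comp,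
      smul_sub, smul_smul, pow_succ']
    exact (sub_add_sub_cancel _ _ _).symm

/-- comparison of `g` with a twist of it -/
theorem eta_main (hη : ∀ N, IsSL σ (η N))
    (nat : ∀ (M N : TMod k T) (f : M →ₗ[k] N), IsSL idT f →
      f ∘ₗ η M = η N ∘ₗ Kn idT.toLinearMap f n) (N : TMod k T)
    (hg : IsSL idT (η N))
    (i : N →ₗ[k] KK n N) (hi : IsSL idT i) (hgi : η N ∘ₗ i = LinearMap.id) :
    Triv σ (η N - (((-1 : k) ^ n) ^ n) •
      (η N ∘ₗ Kn σ.toLinearMap (LinearMap.id : N →ₗ[k] N) n)) := by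
  have h1 := eta_KK η hη nat N n
  rw [castL_rfl, LinearMap.comp_id] at h1
  have h2 := (h1.comp_left hg).comp_right (Kn_sl hi n)
  refine Triv.congr (σ := σ) h2 ?_
  have e1 := nat _ _ _ hg
  rw [LinearMap.comp_sub, LinearMap.sub_comp, e1, LinearMap.comp_assoc, Kn_comp hi]
  have e2 : Kn (idT.comp idT : T →ₐ[k] T).toLinearMap (η N ∘ₗ i) n = LinearMap.id := by
    rw [hgi]; exact Kn_id n
  rw [e2, LinearMap.comp_id, LinearMap.comp_smul, LinearMap.smul_comp, LinearMap.comp_assoc,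
    Kn_comp hi, hgi]
  rfl

end Eta
end
end TE

namespace TE
section
variable {k T : Type} [Field k] [Ring T] [Algebra k T]

structure Grad (k T : Type) [Field k] [Ring T] [Algebra k T] where
  E : T →ₗ[k] T
  idem : ∀ t, E (E t) = E t
  der : ∀ s t, E (s * t) = E s * t + s * E t
  sq : ∀ s t, E s * E t = 0
  faith : ∀ t, (∀ f, E f * t = 0) → E t = t

namespace Grad
variable (G : Grad k T)

def p0 : T →ₗ[k] T := LinearMap.id - G.E

theorem p0_apply (t : T) : G.p0 t = t - G.E t := rfl

theorem p0_mul (s t : T) : G.p0 (s * t) = G.p0 s * G.p0 t := by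
  simp only [p0_apply, G.der, sub_mul, mul_sub, G.sq]; abel

theorem p0_p0 : G.p0 ∘ₗ G.p0 = G.p0 := by
  ext t; simp [p0_apply, G.idem]
theorem p0_E : G.p0 ∘ₗ G.E = 0 := by
  ext t; simp [p0_apply, G.idem]
theorem E_p0 : G.E ∘ₗ G.p0 = 0 := by
  ext t; simp [p0_apply, G.idem]
theorem E_E : G.E ∘ₗ G.E = G.E := by
  ext t; simp [G.idem]

theorem E_mul_split (s t : T) : G.E (s * t) = G.p0 s * G.E t + G.E s * G.p0 t := by
  simp only [p0_apply, G.der, sub_mul, mul_sub, G.sq]; abel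

/-- the left ideal -/
def D : Submodule T T where
  carrier := {t | G.E t = t}
  add_mem' := fun {a b} ha hb => by
    change G.E (a + b) = a + b
    rw [map_add, show G.E a = a from ha, show G.E b = b from hb]
  zero_mem' := map_zero G.E
  smul_mem' := fun c x hx => by
    change G.E (c * x) = c * x
    have hx' : G.E x = x := hx
    have := G.sq c x
    rw [hx'] at this
    rw [G.der, hx', this, zero_add]

theorem mem_D {t : T} : t ∈ G.D ↔ G.E t = t := Iff.rfl

theorem E_mem_D (t : T) : G.E t ∈ G.D := G.idem t

def A0 : TMod k T := { carrier := T ⧸ G.D }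

def one0 : G.A0 := Submodule.Quotient.mk (p := G.D) (1 : T)

theorem smul_one0_eq_zero {t : T} : t • G.one0 = 0 ↔ G.E t = t := by
  have : t • G.one0 = Submodule.Quotient.mk (p := G.D) (t • (1 : T)) := rfl
  rw [this]
  rw [smul_eq_mul, mul_one]
  exact (Submodule.Quotient.mk_eq_zero (p := G.D) (x := t)).trans G.mem_D

theorem A0_surj (x : G.A0) : ∃ t : T, x = t • G.one0 := by
  obtain ⟨t, rfl⟩ := Submodule.Quotient.mk_surjective G.D x
  refine ⟨t, ?_⟩
  change _ = Submodule.Quotient.mk (p := G.D) (t • (1 : T))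
  rw [smul_eq_mul, mul_one]

theorem E_smul_A0 (t : T) (x : G.A0) : G.E t • x = 0 := by
  obtain ⟨s, rfl⟩ := G.A0_surj x
  rw [smul_smul, smul_one0_eq_zero, G.der, G.idem, G.sq, add_zero]

def liftA0 {M : TMod k T} (x0 : M) (h : ∀ t, G.E t • x0 = 0) : G.A0 →ₗ[T] M :=
  Submodule.liftQ G.D (LinearMap.toSpanSingleton T M x0) (fun t ht => by
    have := h t
    rw [show G.E t = t from ht] at this
    simpa using this)

theorem liftA0_smul {M : TMod k T} (x0 : M) (h : ∀ t, G.E t • x0 = 0) (t : T) :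
    G.liftA0 x0 h (t • G.one0) = t • x0 := by
  rw [map_smul]; congr 1
  change Submodule.liftQ G.D (LinearMap.toSpanSingleton T M x0) _ (Submodule.Quotient.mk 1) = x0
  rw [Submodule.liftQ_apply]; simp

attribute [irreducible] A0 one0 liftA0

def sh {M : TMod k T} (w : ℕ → (M →ₗ[k] M)) : ℕ → (M →ₗ[k] M)
  | 0 => 0
  | d + 1 => w d

structure IsGr {M : TMod k T} (w : ℕ → (M →ₗ[k] M)) (N : ℕ) : Prop where
  law : ∀ d t x, w d (t • x) = G.p0 t • w d x + G.E t • sh w d x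
  orth : ∀ d e, w d ∘ₗ w e = if d = e then w d else 0
  bd : ∀ d, N < d → w d = 0
  sum : ∑ d ∈ Finset.range (N + 1), w d = LinearMap.id

def PB {M : TMod k T} (w : ℕ → (M →ₗ[k] M)) (d : ℕ) : B M →ₗ[k] B M :=
  mapB G.p0 (w d) + mapB G.E (sh w d)

variable {G} {M : TMod k T} {w : ℕ → (M →ₗ[k] M)} {N : ℕ}

theorem IsGr.sh_orth (h : G.IsGr w N) (d e : ℕ) :
    sh w d ∘ₗ sh w e = if d = e then sh w d else 0 := by
  cases d with
  | zero => simp [sh]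
  | succ d =>
    cases e with
    | zero => simp [sh]
    | succ e => simp [sh, h.orth]

theorem eps_PB (h : G.IsGr w N) (d : ℕ) (b : B M) : eps M (G.PB w d b) = w d (eps M b) := by
  induction b using B_ind with
  | h0 => simp
  | h1 t x => simp [PB, h.law]
  | h2 a b ha hb => rw [map_add, map_add, map_add, map_add, ha, hb]

theorem PB_smul (d : ℕ) (t : T) (b : B M) :
    G.PB w d (t • b) = G.p0 t • G.PB w d b + G.E t • sh (G.PB w) d b := by
  induction b using B_ind with
  | h0 => simp
  | h1 s x =>
    rw [smul_mk]
    cases d with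
    | zero =>
      simp only [PB, sh, LinearMap.add_apply, mapB_mk, smul_add, smul_mk, p0_mul,
        LinearMap.zero_apply, map_zero, smul_zero, add_zero]
    | succ d =>
      simp only [PB, sh, LinearMap.add_apply, mapB_mk, smul_add, smul_mk, p0_mul, E_mul_split,
        map_add, G.sq, map_zero, LinearMap.zero_apply]
      abel
  | h2 a b ha hb =>
    rw [smul_add, map_add, map_add, map_add, ha, hb, smul_add, smul_add]; abel

theorem isGr_B (h : G.IsGr w N) : G.IsGr (G.PB w) (N + 1) where
  law := PB_smul
  orth d e := by
    have h1 := h.orth d e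
    have h2 := h.sh_orth d e
    simp only [PB, LinearMap.add_comp, LinearMap.comp_add, mapB_comp, h1, h2, G.p0_p0, G.p0_E,
      G.E_p0, G.E_E, mapB_zero_left, add_zero, zero_add]
    split_ifs <;> simp [mapB_zero]
  bd d hd := by
    cases d with
    | zero => omega
    | succ d =>
      simp only [PB, sh, h.bd d (by omega), h.bd (d + 1) (by omega), mapB_zero, add_zero]
  sum := by
    have e1 : ∑ d ∈ Finset.range (N + 1 + 1), w d = LinearMap.id := by
      rw [Finset.sum_range_succ, h.sum, h.bd (N + 1) (by omega), add_zero]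
    have e2 : ∑ d ∈ Finset.range (N + 1 + 1), sh w d = LinearMap.id := by
      rw [Finset.sum_range_succ']; simp only [sh, add_zero]; exact h.sum
    have e3 : ∀ (σ : T →ₗ[k] T) (v : ℕ → (M →ₗ[k] M)) (s : Finset ℕ),
        ∑ d ∈ s, mapB σ (v d) = mapB σ (∑ d ∈ s, v d) := by
      intro σ v s
      induction s using Finset.cons_induction with
      | empty => simp [mapB_zero]
      | cons a s ha ih => rw [Finset.sum_cons, Finset.sum_cons, mapB_add, ih]
    simp only [PB, Finset.sum_add_distrib]
    rw [e3, e3, e1, e2]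
    refine B_ext fun t x => ?_
    simp only [LinearMap.add_apply, mapB_mk, LinearMap.id_apply]
    rw [← LinearMap.add_apply, ← map_add]
    simp [p0_apply]

variable (G) in
def PK {M : TMod k T} (w : ℕ → (M →ₗ[k] M)) (d : ℕ) : K M →ₗ[k] K M :=
  pr M ∘ₗ G.PB w d ∘ₗ incl M

theorem incl_PK (h : G.IsGr w N) (d : ℕ) (x : K M) :
    incl M (G.PK w d x) = G.PB w d (incl M x) :=
  incl_pr_of (by rw [LinearMap.comp_apply, eps_PB h]; simp)

theorem incl_sh_PK (h : G.IsGr w N) (d : ℕ) (x : K M) :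
    incl M (sh (G.PK w) d x) = sh (G.PB w) d (incl M x) := by
  cases d with
  | zero => simp [sh]
  | succ d => exact incl_PK h d x

theorem isGr_K (h : G.IsGr w N) : G.IsGr (G.PK w) (N + 1) where
  law d t x := incl_inj M (by
    have e : ∀ t (x : K M), incl M (t • x) = t • incl M x := incl_sl M
    rw [map_add, incl_PK h, e, e, e, incl_PK h, incl_sh_PK h, (isGr_B h).law])
  orth d e := LinearMap.ext fun x => incl_inj M (by
    rw [LinearMap.comp_apply, incl_PK h, incl_PK h, ← LinearMap.comp_apply, (isGr_B h).orth]
    split_ifs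
    · rw [incl_PK h]
    · simp)
  bd d hd := LinearMap.ext fun x => incl_inj M (by
    rw [incl_PK h, (isGr_B h).bd d hd]; simp)
  sum := LinearMap.ext fun x => incl_inj M (by
    rw [LinearMap.sum_apply, map_sum]
    simp only [incl_PK h]
    rw [← LinearMap.sum_apply, (isGr_B h).sum]; rfl)

def gam {M : TMod k T} (c : T) (w : ℕ → (M →ₗ[k] M)) (N : ℕ) : M →ₗ[k] M :=
  ∑ d ∈ Finset.range (N + 1), c ^ d • w d

theorem gam_apply {M : TMod k T} (c : T) (w : ℕ → (M →ₗ[k] M)) (N : ℕ) (x : M) :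
    gam c w N x = ∑ d ∈ Finset.range (N + 1), c ^ d • w d x := by
  simp [gam, LinearMap.sum_apply]

variable {c : T} {σ : T →ₐ[k] T}

theorem gam_sl (hc : ∀ t, c * t = t * c) (hσ : ∀ t, σ t = G.p0 t + c * G.E t)
    (h : G.IsGr w N) : IsSL σ (gam c w N) := by
  intro t x
  have hcd : ∀ d t, c ^ d * t = t * c ^ d := fun d t => (Commute.pow_left (hc t) d)
  have top : G.E t • w N x = 0 := by
    have := h.law (N + 1) t x
    rw [h.bd (N + 1) (by omega)] at this
    simpa [sh] using this.symm
  rw [gam_apply, gam_apply, hσ, add_smul]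
  have e1 : ∀ d, c ^ d • w d (t • x) = G.p0 t • c ^ d • w d x + G.E t • c ^ d • sh w d x := by
    intro d
    rw [h.law, smul_add, smul_smul, smul_smul, smul_smul, smul_smul, hcd, hcd]
  simp only [e1, Finset.sum_add_distrib, ← Finset.smul_sum]
  congr 1
  rw [hc, mul_smul, Finset.sum_range_succ', Finset.sum_range_succ]
  simp only [sh, LinearMap.zero_apply, smul_zero, add_zero, smul_add]
  have e2 : G.E t • c • c ^ N • w N x = 0 := by
    rw [smul_smul c, ← pow_succ', smul_smul, ← hcd, mul_smul, top, smul_zero]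
  rw [e2, add_zero]
  simp only [pow_succ', mul_smul, Finset.smul_sum]

theorem gam_triv (hc : ∀ t, c * t = t * c) (hσ : ∀ t, σ t = G.p0 t + c * G.E t)
    (h : G.IsGr w N) :
    Triv σ (Kmap σ.toLinearMap (gam c w N) - gam c (G.PK w) (N + 1)) := by
  let δ : B M →ₗ[k] B M := mapB σ.toLinearMap (gam c w N) - gam c (G.PB w) (N + 1)
  have hδ : IsSL σ δ := (mapB_sl σ _).sub (gam_sl hc hσ (isGr_B h))
  have he : ∀ t (x : B M), eps M (t • x) = t • eps M x := eps_sl M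
  have h0 : ∀ b, eps M (δ b) = 0 := by
    intro b
    simp only [δ, LinearMap.sub_apply, map_sub, eps_mapB (gam_sl hc hσ h), gam_apply, map_sum,
      he, eps_PB h]
    rw [Finset.sum_range_succ _ (N + 1), h.bd (N + 1) (by omega)]
    simp
  refine ⟨B M, incl M, pr M ∘ₗ δ, inferInstance, incl_sl M, ?_, ?_⟩
  · intro t x
    refine incl_inj M ?_
    rw [incl_sl]
    simp only [LinearMap.comp_apply]
    rw [incl_pr_of (h0 _), incl_pr_of (h0 _), hδ]; rfl
  · refine LinearMap.ext fun x => incl_inj M ?_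
    have e : ∀ t (x : K M), incl M (t • x) = t • incl M x := incl_sl M
    simp only [LinearMap.comp_apply]
    rw [incl_pr_of (h0 _)]
    simp only [δ, LinearMap.sub_apply, map_sub, incl_Kmap (gam_sl hc hσ h), gam_apply, map_sum,
      e, incl_PK h]

variable (G) in
def pi : ∀ i : ℕ, ℕ → (KK i G.A0 →ₗ[k] KK i G.A0)
  | 0, 0 => LinearMap.id
  | 0, _ + 1 => 0
  | i + 1, d => G.PK (pi i) d

theorem isGr_pi : ∀ i, G.IsGr (G.pi i) i
  | 0 => by
    refine ⟨?_, ?_, ?_, ?_⟩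
    · intro d t x
      match d with
      | 0 =>
        have key : ∀ x : G.A0, t • x = G.p0 t • x + G.E t • (0 : G.A0) := fun x => by
          rw [p0_apply, sub_smul, E_smul_A0]; simp
        exact key x
      | 1 =>
        have key : ∀ x : G.A0, (0 : G.A0) = G.p0 t • (0 : G.A0) + G.E t • x := fun x => by
          rw [E_smul_A0]; simp
        exact key x
      | d + 2 =>
        change (0 : G.A0) = G.p0 t • (0 : G.A0) + G.E t • (0 : G.A0)
        simp
    · intro d e
      match d, e with
      | 0, 0 => rfl
      | 0, e + 1 => exact LinearMap.ext fun x => rfl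
      | d + 1, e =>
        have : G.pi 0 (d + 1) = 0 := rfl
        rw [this]; simp
    · intro d hd
      match d with
      | d + 1 => rfl
    · simp; rfl
  | i + 1 => isGr_K (isGr_pi i)

theorem kap_gam (hc : ∀ t, c * t = t * c) (hσ : ∀ t, σ t = G.p0 t + c * G.E t) :
    ∀ i, Triv σ (Kn σ.toLinearMap (LinearMap.id : G.A0 →ₗ[k] G.A0) i - gam c (G.pi i) i)
  | 0 => by
    refine Triv.congr (a := 0) ⟨B G.A0, 0, 0, inferInstance, fun _ _ => by simp,
      fun _ _ => by simp, by simp⟩ ?_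
    rw [sub_eq_zero]
    refine LinearMap.ext fun x => ?_
    rw [gam_apply]; simp; rfl
  | i + 1 => by
    have h1 := ((kap_gam hc hσ i).map).add (gam_triv hc hσ (isGr_pi (G := G) i))
    refine h1.congr ?_
    rw [Kmap_sub]
    exact (sub_add_sub_cancel _ _ _).symm

theorem kill {N : TMod k T} (hN : ∀ t (x : N), G.E t • x = 0) (hσ : ∀ t, σ t = G.p0 t + c * G.E t)
    {a : M →ₗ[k] N} (ha : Triv σ a) (q : M) (hq : ∀ t, G.E t • q = 0) : a q = 0 := by
  obtain ⟨Q, r, s, hQ, hr, hs, rfl⟩ := ha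
  have hrq : ∀ t, G.E t • r q = 0 := fun t => by
    have := hr (G.E t) q
    rw [hq, map_zero] at this
    exact this.symm
  obtain ⟨ι, hι⟩ := hQ.out
  change s (r q) = 0
  rw [← hι (r q), Finsupp.linearCombination_apply, Finsupp.sum, map_sum]
  refine Finset.sum_eq_zero fun y _ => ?_
  have h1 : G.E (ι (r q) y) = ι (r q) y := by
    refine G.faith _ fun f => ?_
    have := congrArg (fun v => v y) (ι.map_smul (G.E f) (r q))
    simpa [hrq] using this.symm
  have h2 : ι (r q) y • id y = ι (r q) y • y := rfl
  rw [h2, hs, ← h1, hσ]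
  rw [p0_apply, G.idem, sub_self, zero_add, mul_smul, hN, smul_zero]

theorem kill_tensor (b : B M) (hb : ∀ t, G.E t • b = 0) : mapB G.E LinearMap.id b = b := by
  rw [← sub_eq_zero]
  refine co_inj _ fun l => ?_
  have h1 : ∀ (t : T) (b : B M), co l (t • b) = t * co l b := by
    intro t b
    induction b using B_ind with
    | h0 => simp
    | h1 s x => rw [smul_mk, co_mk, co_mk, mul_smul_comm]
    | h2 a b ha hb => rw [smul_add, map_add, map_add, ha, hb, mul_add]
  have h2 : ∀ (b : B M), co l (mapB G.E LinearMap.id b) = G.E (co l b) := by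
    intro b
    induction b using B_ind with
    | h0 => simp
    | h1 s x => rw [mapB_mk, co_mk, co_mk, map_smul]; rfl
    | h2 a b ha hb => rw [map_add, map_add, map_add, map_add, ha, hb]
  rw [map_sub, h2, G.faith _ (fun f => by rw [← h1, hb, map_zero]), sub_self]

theorem PK_zero (h : G.IsGr w N) (x : K M) (hx : ∀ t, G.E t • x = 0) : G.PK w 0 x = 0 := by
  refine incl_inj _ ?_
  have e : ∀ t (x : K M), incl _ (t • x) = t • incl _ x := incl_sl _
  have h1 := kill_tensor (G := G) (incl M x) (fun t => by rw [← e, hx, map_zero])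
  rw [incl_PK h 0 x, ← h1, map_zero]
  simp only [PB, sh, mapB_zero, add_zero, mapB_comp_apply, G.p0_E, mapB_zero_left]
  rfl

theorem pi_zero (i : ℕ) (x : KK (i + 1) G.A0) (hx : ∀ t, G.E t • x = 0) :
    G.pi (i + 1) 0 x = 0 := PK_zero (isGr_pi i) x hx

theorem final {n : ℕ} (hn : 1 ≤ n) (hc : ∀ t, c * t = t * c)
    (hσ : ∀ t, σ t = G.p0 t + c * G.E t) (η : ∀ N : TMod k T, KK n N →ₗ[k] N)
    (hη : ∀ N, IsSL σ (η N))
    (nat : ∀ (M N : TMod k T) (f : M →ₗ[k] N), IsSL idT f →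
      f ∘ₗ η M = η N ∘ₗ Kn idT.toLinearMap f n)
    (x0 : KK n G.A0) (hx0 : ∀ t, G.E t • x0 = 0) (hg : η G.A0 x0 = G.one0) :
    c ^ (2 * n.factorial) • G.one0 = G.one0 := by
  have hcE : ∀ t (y : G.A0), σ t • y = t • y := by
    intro t y
    rw [hσ, p0_apply, add_smul, sub_smul, mul_smul, E_smul_A0, smul_zero, sub_zero, add_zero]
  have hgl : IsSL idT (η G.A0) := fun t x => by
    rw [hη, hcE]; rfl
  have hgi : η G.A0 ∘ₗ ofT (G.liftA0 x0 hx0) = LinearMap.id := by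
    refine LinearMap.ext fun y => ?_
    obtain ⟨t, rfl⟩ := G.A0_surj y
    rw [LinearMap.comp_apply, ofT_apply, liftA0_smul, hgl, hg]; rfl
  have h1 := eta_main η hη nat G.A0 hgl (ofT (G.liftA0 x0 hx0)) (isSL_ofT _) hgi
  have h2 := ((kap_gam (G := G) hc hσ n).comp_left hgl).smul (((-1 : k) ^ n) ^ n)
  set u : k := ((-1 : k) ^ n) ^ n with hu
  have huu : u * u = 1 := by
    rw [hu, ← mul_pow, ← mul_pow]; simp
  have h3 : Triv σ (η G.A0 - u • (η G.A0 ∘ₗ gam c (G.pi n) n)) := by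
    refine (h1.add h2).congr ?_
    rw [LinearMap.comp_sub, smul_sub]
    exact (sub_add_sub_cancel _ _ _).symm
  have hGr := isGr_pi (G := G) n
  have hkill : ∀ d t, G.E t • G.pi n d x0 = 0 := by
    intro d t
    have := hGr.law (d + 1) (G.E t) x0
    rw [hx0, map_zero, G.idem, p0_apply, G.idem, sub_self, zero_smul, zero_add] at this
    exact this.symm
  have h4 : ∀ d ∈ Finset.range (n + 1), η G.A0 (G.pi n d x0)
      = u • c ^ d • η G.A0 (G.pi n d x0) := by
    intro d hd
    have := kill (G := G) G.E_smul_A0 hσ h3 (G.pi n d x0) (hkill d)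
    rw [LinearMap.sub_apply, sub_eq_zero] at this
    have h5 : gam c (G.pi n) n (G.pi n d x0) = c ^ d • G.pi n d x0 := by
      rw [gam_apply]
      rw [Finset.sum_eq_single d]
      · rw [← LinearMap.comp_apply, hGr.orth]; simp
      · intro e _ hne
        rw [← LinearMap.comp_apply, hGr.orth]; simp [hne]
      · intro h; exact absurd hd h
    refine this.trans ?_
    rw [LinearMap.smul_apply, LinearMap.comp_apply, h5, hgl]; rfl
  have h6 : ∀ d ∈ Finset.range (n + 1), c ^ (2 * n.factorial) • η G.A0 (G.pi n d x0)
      = η G.A0 (G.pi n d x0) := by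
    intro d hd
    rcases Nat.eq_zero_or_pos d with rfl | hd0
    · obtain ⟨m, rfl⟩ : ∃ m, n = m + 1 := ⟨n - 1, by omega⟩
      rw [pi_zero m x0 hx0]; simp
    · have h7 : c ^ (2 * d) • η G.A0 (G.pi n d x0) = η G.A0 (G.pi n d x0) := by
        have h8 := h4 d hd
        have h9 : c ^ d • η G.A0 (G.pi n d x0) = u • c ^ (2 * d) • η G.A0 (G.pi n d x0) := by
          conv_lhs => rw [h8]
          rw [smul_comm, smul_smul (c ^ d), ← pow_add, two_mul]
        rw [h9, smul_smul, huu, one_smul] at h8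
        exact h8.symm
      obtain ⟨e, he⟩ : d ∣ n.factorial := Nat.dvd_factorial hd0 (by
        have := Finset.mem_range.mp hd; omega)
      have h10 : ∀ e, (c ^ (2 * d)) ^ e • η G.A0 (G.pi n d x0) = η G.A0 (G.pi n d x0) := by
        intro e
        induction e with
        | zero => simp
        | succ e ih => rw [pow_succ, mul_smul, h7, ih]
      rw [he, ← mul_assoc, pow_mul]; exact h10 e
  have h11 : ∑ d ∈ Finset.range (n + 1), η G.A0 (G.pi n d x0) = G.one0 := by
    rw [← map_sum, ← LinearMap.sum_apply, hGr.sum]; exact hg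
  rw [← h11, Finset.smul_sum]
  exact Finset.sum_congr rfl h6

end Grad
end
end TE

namespace TE

structure BMod (k T : Type) [Field k] [Ring T] [Algebra k T] where
  carrier : Type
  [acg : AddCommGroup carrier]
  [modk : Module k carrier]
  [modT : Module T carrier]
  [modO : Module Tᵐᵒᵖ carrier]
  [tower : IsScalarTower k T carrier]
  [towerO : IsScalarTower k Tᵐᵒᵖ carrier]
  [scc : SMulCommClass T Tᵐᵒᵖ carrier]

instance (k T : Type) [Field k] [Ring T] [Algebra k T] : CoeSort (BMod k T) Type := ⟨BMod.carrier⟩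

attribute [instance] BMod.acg BMod.modk BMod.modT BMod.modO BMod.tower BMod.towerO BMod.scc

section
variable {k T : Type} [Field k] [Ring T] [Algebra k T]

instance bmod_scc (M : BMod k T) : SMulCommClass k T M := IsScalarTower.to_smulCommClass
instance bmod_scc' (M : BMod k T) : SMulCommClass T k M := SMulCommClass.symm _ _ _

def BMod.toT (Z : BMod k T) : TMod k T := { carrier := Z }

def IsL {Z W : BMod k T} (f : Z →ₗ[k] W) : Prop := ∀ (t : T) (z : Z), f (t • z) = t • f z
def IsR {Z W : BMod k T} (f : Z →ₗ[k] W) : Prop := ∀ (b : Tᵐᵒᵖ) (z : Z), f (b • z) = b • f z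

theorem IsR.id {Z : BMod k T} : IsR (LinearMap.id : Z →ₗ[k] Z) := fun _ _ => rfl
theorem IsL.id {Z : BMod k T} : IsL (LinearMap.id : Z →ₗ[k] Z) := fun _ _ => rfl

def bal (Z : BMod k T) (N : TMod k T) : Submodule T (Z ⊗[k] N) :=
  Submodule.span T {w | ∃ (z : Z) (b : T) (x : N),
    w = (MulOpposite.op b • z) ⊗ₜ[k] x - z ⊗ₜ[k] (b • x)}

def Ten (Z : BMod k T) (N : TMod k T) : TMod k T := { carrier := (Z ⊗[k] N) ⧸ bal Z N }

def tenMk (Z : BMod k T) (N : TMod k T) : Z ⊗[k] N →ₗ[k] Ten Z N :=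
  (bal Z N).mkQ.restrictScalars k

def tm (Z : BMod k T) (N : TMod k T) : Z →ₗ[k] N →ₗ[k] Ten Z N :=
  (TensorProduct.mk k Z N).compr₂ (tenMk Z N)

variable {Z W V : BMod k T} {N M L X : TMod k T}

theorem tm_def (z : Z) (x : N) : tm Z N z x = tenMk Z N (z ⊗ₜ x) := rfl

theorem tenMk_surj : Function.Surjective (tenMk Z N) := (bal Z N).mkQ_surjective

theorem Ten_ind {P : Ten Z N → Prop} (b : Ten Z N) (h0 : P 0) (h1 : ∀ t x, P (tm Z N t x))
    (h2 : ∀ a b, P a → P b → P (a + b)) : P b := by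
  obtain ⟨b, rfl⟩ := tenMk_surj b
  induction b using TensorProduct.induction_on with
  | zero => rw [map_zero]; exact h0
  | tmul t x => exact h1 t x
  | add a b ha hb => rw [map_add]; exact h2 _ _ ha hb

theorem smul_tm (t : T) (z : Z) (x : N) : t • tm Z N z x = tm Z N (t • z) x := by
  have h : t • (z ⊗ₜ[k] x : Z ⊗[k] N) = (t • z) ⊗ₜ[k] x := TensorProduct.smul_tmul' t z x
  rw [tm_def, tm_def, ← h]; rfl

theorem tm_bal (b : T) (z : Z) (x : N) : tm Z N (MulOpposite.op b • z) x = tm Z N z (b • x) := by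
  rw [← sub_eq_zero, tm_def, tm_def, ← map_sub]
  exact (Submodule.Quotient.mk_eq_zero (bal Z N)).mpr (Submodule.subset_span ⟨z, b, x, rfl⟩)

theorem lift_vanish (f : Z ⊗[k] N →ₗ[k] X)
    (h : ∀ (b : T) z x, f ((MulOpposite.op b • z) ⊗ₜ[k] x) = f (z ⊗ₜ[k] (b • x))) :
    ∀ w ∈ bal Z N, ∀ t : T, f (t • w) = 0 := by
  intro w hw
  induction hw using Submodule.span_induction with
  | mem w hw =>
    obtain ⟨z, b, x, rfl⟩ := hw
    intro t
    rw [smul_sub, TensorProduct.smul_tmul', TensorProduct.smul_tmul', smul_comm, map_sub, h,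
      sub_self]
  | zero => intro t; simp
  | add a b _ _ ha hb => intro t; rw [smul_add, map_add, ha, hb, add_zero]
  | smul s w _ ih => intro t; rw [smul_smul]; exact ih _

def tenLift (f : Z →ₗ[k] N →ₗ[k] X)
    (h : ∀ (b : T) z x, f (MulOpposite.op b • z) x = f z (b • x)) : Ten Z N →ₗ[k] X :=
  Submodule.liftQ ((bal Z N).restrictScalars k) (TensorProduct.lift f) (fun w hw => by
    have := lift_vanish (TensorProduct.lift f) (by simpa using h) w hw 1
    simpa using this)

@[simp] theorem tenLift_tm (f : Z →ₗ[k] N →ₗ[k] X)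
    (h : ∀ (b : T) z x, f (MulOpposite.op b • z) x = f z (b • x)) (z : Z) (x : N) :
    tenLift f h (tm Z N z x) = f z x := rfl

attribute [irreducible] Ten tm tenLift tenMk

theorem Ten_ext {f g : Ten Z N →ₗ[k] X} (h : ∀ z x, f (tm Z N z x) = g (tm Z N z x)) : f = g := by
  refine LinearMap.ext fun b => ?_
  induction b using Ten_ind with
  | h0 => simp
  | h1 t x => exact h t x
  | h2 a b ha hb => rw [map_add, map_add, ha, hb]

theorem tenLift_sl {σ : T →ₐ[k] T} {f : Z →ₗ[k] N →ₗ[k] X}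
    {h : ∀ (b : T) z x, f (MulOpposite.op b • z) x = f z (b • x)}
    (h' : ∀ t z x, f (t • z) x = σ t • f z x) : IsSL σ (tenLift f h) := by
  intro t b
  induction b using Ten_ind with
  | h0 => simp
  | h1 z x => rw [smul_tm, tenLift_tm, tenLift_tm, h']
  | h2 a b ha hb => rw [smul_add, map_add, map_add, ha, hb, smul_add]

def tmap {ρ : Z →ₗ[k] W} (hρ : IsR ρ) {f : N →ₗ[k] M} (hf : IsSL idT f) : Ten Z N →ₗ[k] Ten W M :=
  tenLift ((tm W M).compl₁₂ ρ f) (fun b z x => by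
    simp only [LinearMap.compl₁₂_apply]
    rw [hρ, tm_bal, hf]; rfl)

@[simp] theorem tmap_tm {ρ : Z →ₗ[k] W} (hρ : IsR ρ) {f : N →ₗ[k] M} (hf : IsSL idT f) (z : Z)
    (x : N) : tmap hρ hf (tm Z N z x) = tm W M (ρ z) (f x) := by simp [tmap]

theorem tmap_sl {ρ : Z →ₗ[k] W} (hρ : IsR ρ) (hl : IsL ρ) {f : N →ₗ[k] M} (hf : IsSL idT f) :
    IsSL idT (tmap hρ hf) := tenLift_sl fun t z x => by
  simp only [LinearMap.compl₁₂_apply]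
  rw [hl, ← smul_tm]; rfl

structure XP (N0 : TMod k T) (i : ℕ) (Z : BMod k T) where
  ζ : ∀ N : TMod k T, KK i N →ₗ[k] Ten Z N
  sl : ∀ N, IsSL idT (ζ N)
  nat : ∀ (M N : TMod k T) (f : M →ₗ[k] N) (hf : IsSL idT f),
    tmap IsR.id hf ∘ₗ ζ M = ζ N ∘ₗ Kn idT.toLinearMap f i
  j : Ten Z N0 →ₗ[k] KK i N0
  jsl : IsSL idT j
  triv : Triv idT (ζ N0 ∘ₗ j - LinearMap.id)
  rproj : Module.Projective Tᵐᵒᵖ Z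

structure Ses (Y P Z : BMod k T) where
  ι : Y →ₗ[k] P
  π : P →ₗ[k] Z
  ιL : IsL ι
  ιR : IsR ι
  πL : IsL π
  πR : IsR π
  inj : Function.Injective ι
  surj : Function.Surjective π
  zero : ∀ y, π (ι y) = 0
  ex : ∀ p, π p = 0 → ∃ y, ι y = p

theorem xp_step {N0 : TMod k T} {i : ℕ} {Y P Z : BMod k T} (x : XP N0 i Z) (S : Ses Y P Z)
    (hP : Module.Projective Tᵐᵒᵖ P) (hP0 : Module.Projective T (Ten P N0)) :
    Nonempty (XP N0 (i + 1) Y) := by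
  obtain ⟨ζ, sl, nat, j, jsl, triv, rproj⟩ := x
  obtain ⟨ι, π, ιL, ιR, πL, πR, inj, surj, zero, ex⟩ := S
  -- the right linear section
  obtain ⟨ρ', hρ'⟩ := Module.projective_lifting_property
    ({ toFun := π, map_add' := π.map_add, map_smul' := πR } : P →ₗ[Tᵐᵒᵖ] Z)
    (LinearMap.id : Z →ₗ[Tᵐᵒᵖ] Z) surj
  obtain ⟨ρ, ρR, hρ⟩ : ∃ ρ : Z →ₗ[k] P, IsR ρ ∧ ∀ z, π (ρ z) = z :=
    ⟨ρ'.restrictScalars k, fun b z => ρ'.map_smul b z, fun z => LinearMap.congr_fun hρ' z⟩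
  have hex : ∀ p, ∃ y, ι y = p - ρ (π p) := fun p => ex _ (by rw [map_sub, hρ, sub_self])
  choose r0 hr0 using hex
  obtain ⟨r, hr⟩ : ∃ r : P →ₗ[k] Y, ∀ p, ι (r p) = p - ρ (π p) :=
    ⟨{ toFun := r0
       map_add' := fun a b => inj (by rw [map_add]; simp only [hr0, map_add]; abel)
       map_smul' := fun u b => inj (by
        rw [map_smul]; simp only [hr0, map_smul, smul_sub, RingHom.id_apply]) }, hr0⟩
  have rR : IsR r := fun b p => inj (by
    have h1 := hr (b • p)
    rw [πR, ρR, ← smul_sub, ← hr, ← ιR] at h1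
    exact h1)
  have rι : ∀ y, r (ι y) = y := fun y => inj (by rw [hr, zero, map_zero, sub_zero])
  -- induced maps
  let tι : ∀ N : TMod k T, Ten Y N →ₗ[k] Ten P N := fun N => tmap ιR IsSL.id
  let tr : ∀ N : TMod k T, Ten P N →ₗ[k] Ten Y N := fun N => tmap rR IsSL.id
  let tπ : ∀ N : TMod k T, Ten P N →ₗ[k] Ten Z N := fun N => tmap πR IsSL.id
  let tρ : ∀ N : TMod k T, Ten Z N →ₗ[k] Ten P N := fun N => tmap ρR IsSL.id
  have tιsl : ∀ N, IsSL idT (tι N) := fun N => tmap_sl ιR ιL IsSL.id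
  have tπsl : ∀ N, IsSL idT (tπ N) := fun N => tmap_sl πR πL IsSL.id
  have e1 : ∀ N x, tr N (tι N x) = x := fun N => LinearMap.congr_fun
    (show tr N ∘ₗ tι N = LinearMap.id from Ten_ext fun z x => by simp [tr, tι, rι])
  have e2 : ∀ N x, tπ N (tρ N x) = x := fun N => LinearMap.congr_fun
    (show tπ N ∘ₗ tρ N = LinearMap.id from Ten_ext fun z x => by simp [tπ, tρ, hρ])
  have e3 : ∀ N x, tι N (tr N x) = x - tρ N (tπ N x) := fun N => LinearMap.congr_fun
    (show tι N ∘ₗ tr N = LinearMap.id - tρ N ∘ₗ tπ N from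
      Ten_ext fun z x => by simp [tπ, tρ, tr, tι, hr])
  have e4 : ∀ N x, tπ N (tι N x) = 0 := fun N => LinearMap.congr_fun
    (show tπ N ∘ₗ tι N = 0 from Ten_ext fun z x => by simp [tπ, tι, zero])
  have e5 : ∀ N x, tπ N x = 0 → tι N (tr N x) = x := fun N x hx => by
    rw [e3, hx, map_zero, sub_zero]
  have tιinj : ∀ N, Function.Injective (tι N) := fun N => Function.LeftInverse.injective (e1 N)
  have trsl : ∀ N (t : T) x, tπ N x = 0 → tr N (t • x) = t • tr N x := fun N t x hx =>
    tιinj N (by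
      have h1 : tπ N (t • x) = 0 := by rw [tπsl, hx, smul_zero]
      rw [e5 N _ h1, tιsl, e5 N x hx]; rfl)
  let ζh : ∀ N : TMod k T, B (KK i N) →ₗ[k] Ten P N := fun N =>
    eps (Ten P N) ∘ₗ mapB (idT (k := k) (T := T)).toLinearMap (tρ N ∘ₗ ζ N)
  have ζhsl : ∀ N, IsSL idT (ζh N) := fun N => (eps_sl _).comp (mapB_sl idT _)
  have ζhmk : ∀ N t x, ζh N (mk _ t x) = t • tρ N (ζ N x) := fun N t x => by simp [ζh]
  have e6 : ∀ N b, tπ N (ζh N b) = ζ N (eps _ b) := fun N => LinearMap.congr_fun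
    (show tπ N ∘ₗ ζh N = ζ N ∘ₗ eps _ from B_ext fun t x => by
      simp only [LinearMap.comp_apply, ζhmk, eps_mk]
      rw [tπsl, e2, sl])
  have e7 : ∀ N x, tπ N (ζh N (incl _ x)) = 0 := fun N x => by rw [e6]; simp
  have hs : Function.Surjective (eps_sl (KK i N0)).toT := fun x => ⟨mk _ 1 x, by simp⟩
  obtain ⟨jh, hjh⟩ := Module.projective_lifting_property (eps_sl (KK i N0)).toT
    (jsl.comp (tπsl N0) : IsSL idT (j ∘ₗ tπ N0)).toT hs
  have hjh' : ∀ w, eps _ (jh w) = j (tπ N0 w) := fun w => LinearMap.congr_fun hjh w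
  have hj0 : ∀ w, eps _ (jh (tι N0 w)) = 0 := fun w => by rw [hjh', e4, map_zero]
  have hincl : ∀ t (x : K (KK i N0)), incl _ (t • x) = t • incl _ x := incl_sl _
  obtain ⟨Q, q, s, hQ, qsl, ssl, hqs⟩ := triv
  obtain ⟨sh, hsh⟩ := Module.projective_lifting_property (tπsl N0).toT ssl.toT
    (fun x => ⟨tρ N0 x, e2 N0 x⟩)
  have hsh' : ∀ w, tπ N0 (sh w) = s w := fun w => LinearMap.congr_fun hsh w
  let e : Ten P N0 →ₗ[k] Ten P N0 :=
    ζh N0 ∘ₗ ofT jh - LinearMap.id - ofT sh ∘ₗ q ∘ₗ tπ N0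
  have esl : IsSL idT e := (((ζhsl N0).comp (isSL_ofT jh)).sub IsSL.id).sub
    ((isSL_ofT sh).comp (qsl.comp (tπsl N0)))
  have e8 : ∀ w, tπ N0 (e w) = 0 := by
    intro w
    have := LinearMap.congr_fun hqs (tπ N0 w)
    simp only [LinearMap.sub_apply, LinearMap.comp_apply, LinearMap.id_apply] at this
    simp only [e, LinearMap.sub_apply, LinearMap.comp_apply, LinearMap.id_apply, map_sub, ofT_apply,
      e6, hjh', hsh', ← this]
    abel
  refine ⟨⟨fun N => tr N ∘ₗ ζh N ∘ₗ incl _, ?_, ?_, pr _ ∘ₗ ofT jh ∘ₗ tι N0, ?_, ?_, ?_⟩⟩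
  · intro N t x
    have h1 : ∀ t (x : K (KK i N)), incl _ (t • x) = t • incl _ x := incl_sl _
    have key : ∀ (t : T) (x : K (KK i N)),
        tr N (ζh N (incl _ (t • x))) = t • tr N (ζh N (incl _ x)) := by
      intro t x
      rw [h1, ζhsl]
      exact trsl N t _ (e7 N x)
    exact key t x
  · intro M N f hf
    have h1 : ∀ b, ζh N (mapB (idT (k := k) (T := T)).toLinearMap (Kn idT.toLinearMap f i) b)
        = tmap IsR.id hf (ζh M b) := LinearMap.congr_fun
      (show ζh N ∘ₗ mapB _ (Kn idT.toLinearMap f i) = tmap IsR.id hf ∘ₗ ζh M from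
        B_ext fun t x => by
          have h2 := LinearMap.congr_fun (nat M N f hf) x
          simp only [LinearMap.comp_apply] at h2
          simp only [LinearMap.comp_apply, mapB_mk, ζhmk]
          rw [tmap_sl IsR.id IsL.id hf, ← h2]
          change t • _ = t • _
          congr 1
          refine LinearMap.congr_fun
            (show tρ N ∘ₗ tmap IsR.id hf = tmap IsR.id hf ∘ₗ tρ M from ?_) (ζ M x)
          exact Ten_ext fun z x => by simp [tρ])
    refine LinearMap.ext fun x => ?_
    have h3 : ∀ x : K (KK i M), incl (KK i N) (Kmap idT.toLinearMap (Kn idT.toLinearMap f i) x)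
      = _ := fun x => incl_Kmap (Kn_sl hf i) x
    have key : ∀ x : K (KK i M), tmap IsR.id hf (tr M (ζh M (incl _ x))) =
        tr N (ζh N (incl _ (Kmap idT.toLinearMap (Kn idT.toLinearMap f i) x))) := by
      intro x
      rw [h3, h1]
      refine LinearMap.congr_fun
        (show tmap IsR.id hf ∘ₗ tr M = tr N ∘ₗ tmap IsR.id hf from ?_) _
      exact Ten_ext fun z x => by simp [tr]
    exact key x
  · intro t w
    refine incl_inj (KK i N0) ?_
    change incl (KK i N0) (pr _ (jh (tι N0 (t • w)))) = incl (KK i N0) (t • pr _ (jh (tι N0 w)))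
    rw [hincl, incl_pr_of (hj0 _), incl_pr_of (hj0 _), tιsl]
    exact jh.map_smul t _
  · refine ⟨Ten P N0, tι N0, tr N0 ∘ₗ e, hP0, tιsl N0, ?_, ?_⟩
    · intro t w
      rw [LinearMap.comp_apply, esl]
      exact trsl N0 t _ (e8 w)
    · refine LinearMap.ext fun w => ?_
      change tr N0 (ζh N0 (incl (KK i N0) (pr _ (jh (tι N0 w))))) - w = tr N0 (e (tι N0 w))
      rw [incl_pr_of (hj0 _)]
      simp only [e, LinearMap.sub_apply, LinearMap.comp_apply, LinearMap.id_apply, map_sub,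
        ofT_apply, e4, map_zero, sub_zero, e1]
  · exact Module.Projective.of_split
      ({ toFun := ι, map_add' := ι.map_add, map_smul' := ιR } : Y →ₗ[Tᵐᵒᵖ] P)
      ({ toFun := r, map_add' := r.map_add, map_smul' := rR } : P →ₗ[Tᵐᵒᵖ] Y)
      (LinearMap.ext rι)

/-- transport along an isomorphism -/
theorem xp_iso {N0 : TMod k T} {i : ℕ} {Y Z : BMod k T} (x : XP N0 i Z)
    (f : Y →ₗ[k] Z) (g : Z →ₗ[k] Y) (fL : IsL f) (fR : IsR f) (gL : IsL g) (gR : IsR g)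
    (hgf : ∀ y, g (f y) = y) : Nonempty (XP N0 i Y) := by
  obtain ⟨ζ, sl, nat, j, jsl, triv, rproj⟩ := x
  have e1 : ∀ N x, tmap gR (IsSL.id (M := N)) (tmap fR IsSL.id x) = x := fun N =>
    LinearMap.congr_fun (show tmap gR (IsSL.id (M := N)) ∘ₗ tmap fR IsSL.id = LinearMap.id from
      Ten_ext fun z x => by simp [hgf])
  refine ⟨⟨fun N => tmap gR IsSL.id ∘ₗ ζ N, ?_, ?_, j ∘ₗ tmap fR IsSL.id, ?_, ?_, ?_⟩⟩
  · exact fun N => (tmap_sl gR gL IsSL.id).comp (sl N)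
  · intro M N h hh
    refine LinearMap.ext fun x => ?_
    have h2 := LinearMap.congr_fun (nat M N h hh) x
    simp only [LinearMap.comp_apply] at h2 ⊢
    rw [← h2]
    refine LinearMap.congr_fun
      (show tmap IsR.id hh ∘ₗ tmap gR IsSL.id = tmap gR IsSL.id ∘ₗ tmap IsR.id hh from ?_) _
    exact Ten_ext fun z x => by simp
  · exact jsl.comp (tmap_sl fR fL IsSL.id)
  · refine Triv.congr ((triv.comp_left (tmap_sl gR gL IsSL.id)).comp_right
      (tmap_sl fR fL IsSL.id)) ?_
    refine LinearMap.ext fun w => ?_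
    simp only [LinearMap.sub_apply, LinearMap.comp_apply, LinearMap.id_apply, map_sub, e1]
  · exact Module.Projective.of_split
      ({ toFun := f, map_add' := f.map_add, map_smul' := fR } : Y →ₗ[Tᵐᵒᵖ] Z)
      ({ toFun := g, map_add' := g.map_add, map_smul' := gR } : Z →ₗ[Tᵐᵒᵖ] Y)
      (LinearMap.ext hgf)

def regB (k T : Type) [Field k] [Ring T] [Algebra k T] : BMod k T := { carrier := T }

theorem xp_base (N0 : TMod k T) : Nonempty (XP N0 0 (regB k T)) := by
  have hop : ∀ (b t : T), (MulOpposite.op b • (show regB k T from t)) = (show regB k T from t * b) :=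
    fun b t => rfl
  have hl : ∀ (b t : T), (b • (show regB k T from t)) = (show regB k T from b * t) :=
    fun b t => rfl
  let o : regB k T := (1 : T)
  let ev : Ten (regB k T) N0 →ₗ[k] N0 := tenLift (Z := regB k T) (N := N0) (X := N0)
    ((Algebra.lsmul k k N0 : T →ₐ[k] Module.End k N0).toLinearMap : T →ₗ[k] N0 →ₗ[k] N0) (fun b z x => mul_smul (α := T) z b x)
  have evtm : ∀ (z : T) x, ev (tm (regB k T) N0 z x) = z • x := fun z x => tenLift_tm _ _ _ _
  have key : ∀ (N : TMod k T) (z : T) (x : N), tm (regB k T) N z x = tm (regB k T) N o (z • x) := by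
    intro N z x
    rw [← tm_bal]
    have : MulOpposite.op z • o = (z : regB k T) := (hop z 1).trans (one_mul z)
    rw [this]
  refine ⟨⟨fun N => tm (regB k T) N o, ?_, ?_, ev, ?_, ?_, ?_⟩⟩
  · have key2 : ∀ (N : TMod k T) (t : T) (x : N),
        tm (regB k T) N o (t • x) = t • tm (regB k T) N o x := by
      intro N t x
      have h1 : t • o = (t : regB k T) := (hl t 1).trans (mul_one t)
      rw [smul_tm, h1, ← key]
    exact fun N => key2 N
  · intro M N f hf
    refine LinearMap.ext fun x => ?_
    exact tmap_tm IsR.id hf o x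
  · exact tenLift_sl fun t z x => mul_smul (α := T) t z x
  · have : tm (regB k T) N0 o ∘ₗ ev = LinearMap.id := Ten_ext fun z x =>
      (congrArg (tm (regB k T) N0 o) (evtm z x)).trans (key N0 z x).symm
    have h2 : Triv idT (0 : Ten (regB k T) N0 →ₗ[k] Ten (regB k T) N0) :=
      ⟨B N0, 0, 0, inferInstance, fun _ _ => by simp, fun _ _ => by simp, by simp⟩
    refine h2.congr ?_
    exact sub_eq_zero.mpr this
  · refine Module.Projective.of_split (R := Tᵐᵒᵖ) (M := Tᵐᵒᵖ) (P := regB k T)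
      { toFun := fun t => MulOpposite.op (show T from t), map_add' := fun _ _ => rfl,
        map_smul' := fun _ _ => rfl }
      { toFun := fun t => (show regB k T from t.unop), map_add' := fun _ _ => rfl,
        map_smul' := fun _ _ => rfl } rfl

end
end TE

namespace TE
section
variable {k T : Type} [Field k] [Ring T] [Algebra k T]

/-- the two-sided module underlying a module over the enveloping algebra -/
def bmod (P : Type) [AddCommGroup P] [Module k P] [Module (T ⊗[k] Tᵐᵒᵖ) P]
    [IsScalarTower k (T ⊗[k] Tᵐᵒᵖ) P] : BMod k T :=
  letI i1 : Module T P := Module.compHom P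
    (Algebra.TensorProduct.includeLeft : T →ₐ[k] T ⊗[k] Tᵐᵒᵖ).toRingHom
  letI i2 : Module Tᵐᵒᵖ P := Module.compHom P
    (Algebra.TensorProduct.includeRight : Tᵐᵒᵖ →ₐ[k] T ⊗[k] Tᵐᵒᵖ).toRingHom
  { carrier := P
    modT := i1
    modO := i2
    tower := ⟨fun c t x => by
      change ((c • t) ⊗ₜ[k] (1 : Tᵐᵒᵖ)) • x = c • ((t ⊗ₜ[k] (1 : Tᵐᵒᵖ)) • x)
      rw [← smul_assoc, TensorProduct.smul_tmul']⟩
    towerO := ⟨fun c t x => by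
      change ((1 : T) ⊗ₜ[k] (c • t)) • x = c • (((1 : T) ⊗ₜ[k] t) • x)
      rw [← smul_assoc, TensorProduct.tmul_smul]⟩
    scc := ⟨fun a b x => by
      change (a ⊗ₜ[k] (1 : Tᵐᵒᵖ)) • ((1 : T) ⊗ₜ[k] b) • x
        = ((1 : T) ⊗ₜ[k] b) • (a ⊗ₜ[k] (1 : Tᵐᵒᵖ)) • x
      rw [← mul_smul, ← mul_smul]; simp⟩ }

section
variable {P Q : Type} [AddCommGroup P] [Module k P] [Module (T ⊗[k] Tᵐᵒᵖ) P]
    [IsScalarTower k (T ⊗[k] Tᵐᵒᵖ) P] [AddCommGroup Q] [Module k Q] [Module (T ⊗[k] Tᵐᵒᵖ) Q]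
    [IsScalarTower k (T ⊗[k] Tᵐᵒᵖ) Q]

def bmap (f : P →ₗ[T ⊗[k] Tᵐᵒᵖ] Q) : bmod (k := k) (T := T) P →ₗ[k] bmod (k := k) (T := T) Q :=
  (f.restrictScalars k : P →ₗ[k] Q)

theorem bmap_L (f : P →ₗ[T ⊗[k] Tᵐᵒᵖ] Q) : IsL (bmap f) := fun t x =>
  f.map_smul (t ⊗ₜ[k] (1 : Tᵐᵒᵖ)) x
theorem bmap_R (f : P →ₗ[T ⊗[k] Tᵐᵒᵖ] Q) : IsR (bmap f) := fun t x =>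
  f.map_smul ((1 : T) ⊗ₜ[k] t) x

/-- the free case, right projectivity -/
theorem free_right (I : Type) :
    Module.Projective Tᵐᵒᵖ (bmod (k := k) (T := T) (I →₀ (T ⊗[k] Tᵐᵒᵖ))) := by
  let e := TensorProduct.comm k T Tᵐᵒᵖ
  have he : ∀ (b : Tᵐᵒᵖ) (r : T ⊗[k] Tᵐᵒᵖ), e (((1 : T) ⊗ₜ[k] b) * r) = b • e r := by
    intro b r
    induction r using TensorProduct.induction_on with
    | zero => simp
    | tmul x y => simp [e, TensorProduct.smul_tmul']
    | add x y hx hy => rw [mul_add, map_add, map_add, hx, hy, smul_add]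
  have he' : ∀ (b : Tᵐᵒᵖ) (r : Tᵐᵒᵖ ⊗[k] T), e.symm (b • r) = ((1 : T) ⊗ₜ[k] b) * e.symm r := by
    intro b r
    apply e.injective
    rw [he]; simp
  have : Module.Projective Tᵐᵒᵖ (I →₀ (Tᵐᵒᵖ ⊗[k] T)) := inferInstance
  refine Module.Projective.of_split (R := Tᵐᵒᵖ) (M := I →₀ (Tᵐᵒᵖ ⊗[k] T))
    (P := bmod (k := k) (T := T) (I →₀ (T ⊗[k] Tᵐᵒᵖ)))
    { toFun := fun f => Finsupp.mapRange e (map_zero e) (show I →₀ (T ⊗[k] Tᵐᵒᵖ) from f)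
      map_add' := fun f g => Finsupp.mapRange_add (fun a b => map_add e a b) _ _
      map_smul' := fun b f => Finsupp.ext fun i => he b ((show I →₀ (T ⊗[k] Tᵐᵒᵖ) from f) i) }
    { toFun := fun f => (Finsupp.mapRange e.symm (map_zero e.symm) f : I →₀ (T ⊗[k] Tᵐᵒᵖ))
      map_add' := fun f g => Finsupp.mapRange_add (fun a b => map_add e.symm a b) _ _
      map_smul' := fun b f => by
        have : Finsupp.mapRange e.symm (map_zero e.symm) (b • f) =
          ((1 : T) ⊗ₜ[k] b) • Finsupp.mapRange e.symm (map_zero e.symm) f :=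
            Finsupp.ext fun i => he' b (f i)
        exact this } ?_
  refine LinearMap.ext fun f => ?_
  refine Finsupp.ext (M := T ⊗[k] Tᵐᵒᵖ) fun i => ?_
  exact e.symm_apply_apply _

theorem retr (hP : Module.Projective (T ⊗[k] Tᵐᵒᵖ) P) :
    ∃ (s : bmod (k := k) (T := T) P →ₗ[k] bmod (k := k) (T := T) (P →₀ (T ⊗[k] Tᵐᵒᵖ)))
      (r : bmod (k := k) (T := T) (P →₀ (T ⊗[k] Tᵐᵒᵖ)) →ₗ[k] bmod (k := k) (T := T) P),
      IsL s ∧ IsR s ∧ IsL r ∧ IsR r ∧ ∀ x, r (s x) = x := by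
  obtain ⟨s, hs⟩ := hP.out
  exact ⟨bmap (P := P) (Q := P →₀ (T ⊗[k] Tᵐᵒᵖ)) s,
    bmap (P := P →₀ (T ⊗[k] Tᵐᵒᵖ)) (Q := P) (Finsupp.linearCombination (T ⊗[k] Tᵐᵒᵖ) (id : P → P)),
    bmap_L (P := P) (Q := P →₀ (T ⊗[k] Tᵐᵒᵖ)) s, bmap_R (P := P) (Q := P →₀ (T ⊗[k] Tᵐᵒᵖ)) s,
    bmap_L (P := P →₀ (T ⊗[k] Tᵐᵒᵖ)) (Q := P) _, bmap_R (P := P →₀ (T ⊗[k] Tᵐᵒᵖ)) (Q := P) _, hs⟩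

theorem proj_right (hP : Module.Projective (T ⊗[k] Tᵐᵒᵖ) P) :
    Module.Projective Tᵐᵒᵖ (bmod (k := k) (T := T) P) := by
  obtain ⟨s, r, sL, sR, rL, rR, hs⟩ := retr hP
  have := free_right (k := k) (T := T) P
  exact Module.Projective.of_split
      ({ toFun := s, map_add' := s.map_add, map_smul' := sR } :
        bmod (k := k) (T := T) P →ₗ[Tᵐᵒᵖ] bmod (k := k) (T := T) (P →₀ (T ⊗[k] Tᵐᵒᵖ)))
      ({ toFun := r, map_add' := r.map_add, map_smul' := rR } :
        bmod (k := k) (T := T) (P →₀ (T ⊗[k] Tᵐᵒᵖ)) →ₗ[Tᵐᵒᵖ] bmod (k := k) (T := T) P)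
      (LinearMap.ext hs)

theorem free_ten (I : Type) (N : TMod k T) :
    Module.Projective T (Ten (bmod (k := k) (T := T) (I →₀ (T ⊗[k] Tᵐᵒᵖ))) N) := by
  classical
  let W : TMod k T := { carrier := I →₀ N }
  let F : BMod k T := bmod (k := k) (T := T) (I →₀ (T ⊗[k] Tᵐᵒᵖ))
  let sg : I → N →ₗ[k] W := fun q => Finsupp.lsingle q
  let act : Tᵐᵒᵖ →ₗ[k] N →ₗ[k] N :=
    (Algebra.lsmul k k N : T →ₐ[k] Module.End k N).toLinearMap ∘ₗ (MulOpposite.opLinearEquiv k).symm.toLinearMap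
  have hact : ∀ b x, act b x = b.unop • x := fun b x => rfl
  let th : I → T ⊗[k] Tᵐᵒᵖ →ₗ[k] N →ₗ[k] B W := fun q => TensorProduct.lift
    (((LinearMap.llcomp k N W (B W)) ∘ₗ mk W).compl₂ ((LinearMap.llcomp k N N W (sg q)) ∘ₗ act))
  have hth : ∀ q a b x, th q (a ⊗ₜ b) x = mk W a (sg q (b.unop • x)) := fun q a b x => rfl
  have hthR : ∀ q (b : T) r x, th q (((1 : T) ⊗ₜ[k] MulOpposite.op b) * r) x = th q r (b • x) := by
    intro q b r x
    induction r using TensorProduct.induction_on with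
    | zero => simp
    | tmul a c =>
      rw [Algebra.TensorProduct.tmul_mul_tmul, hth, hth, one_mul, smul_smul]; rfl
    | add r s hr hs => rw [mul_add, map_add, map_add, LinearMap.add_apply, LinearMap.add_apply, hr, hs]
  have hthL : ∀ q (b : T) r x, th q ((b ⊗ₜ[k] (1 : Tᵐᵒᵖ)) * r) x = b • th q r x := by
    intro q b r x
    induction r using TensorProduct.induction_on with
    | zero => simp
    | tmul a c =>
      rw [Algebra.TensorProduct.tmul_mul_tmul, hth, hth, one_mul, smul_mk]
    | add r s hr hs =>
      rw [mul_add, map_add, map_add, LinearMap.add_apply, LinearMap.add_apply, hr, hs, smul_add]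
  let th' : (I →₀ (T ⊗[k] Tᵐᵒᵖ)) →ₗ[k] N →ₗ[k] B W := Finsupp.lsum k th
  have hth' : ∀ q r x, th' (Finsupp.single q r) x = th q r x := fun q r x => by simp [th']
  have hR' : ∀ (b : T) (f : I →₀ (T ⊗[k] Tᵐᵒᵖ)) x,
      th' (((1 : T) ⊗ₜ[k] MulOpposite.op b) • f) x = th' f (b • x) := by
    intro b f x
    induction f using Finsupp.induction_linear with
    | zero => simp
    | add f g hf hg => rw [smul_add, map_add, map_add, LinearMap.add_apply, LinearMap.add_apply, hf, hg]
    | single q r => rw [Finsupp.smul_single, smul_eq_mul, hth', hth', hthR]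
  have hL' : ∀ (b : T) (f : I →₀ (T ⊗[k] Tᵐᵒᵖ)) x,
      th' ((b ⊗ₜ[k] (1 : Tᵐᵒᵖ)) • f) x = b • th' f x := by
    intro b f x
    induction f using Finsupp.induction_linear with
    | zero => simp
    | add f g hf hg =>
      rw [smul_add, map_add, map_add, LinearMap.add_apply, LinearMap.add_apply, hf, hg, smul_add]
    | single q r => rw [Finsupp.smul_single, smul_eq_mul, hth', hth', hthL]
  let s : Ten F N →ₗ[k] B W := tenLift (Z := F) (N := N) (X := B W) th' (fun b z x => hR' b z x)
  have ssl : IsSL idT s := tenLift_sl fun t z x => hL' t z x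
  let o : I → F := fun q => (Finsupp.single q 1 : I →₀ (T ⊗[k] Tᵐᵒᵖ))
  let rr : W →ₗ[k] Ten F N := (Finsupp.lsum k (fun q => tm F N (o q)) : (I →₀ N) →ₗ[k] Ten F N)
  have hrr : ∀ q x, rr (sg q x) = tm F N (o q) x := fun q x => Finsupp.lsum_single k _ q x
  let r : B W →ₗ[k] Ten F N := eps _ ∘ₗ mapB (idT (k := k) (T := T)).toLinearMap rr
  have rsl : IsSL idT r := (eps_sl _).comp (mapB_sl idT _)
  have hrs : r ∘ₗ s = LinearMap.id := by
    refine Ten_ext fun f x => ?_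
    have : ∀ (f : I →₀ (T ⊗[k] Tᵐᵒᵖ)), r (th' f x) = tm F N f x := by
      intro f
      induction f using Finsupp.induction_linear with
      | zero => 
        rw [map_zero, LinearMap.zero_apply, map_zero]
        exact (LinearMap.congr_fun (map_zero (tm F N)) x).symm
      | add f g hf hg =>
        rw [map_add, LinearMap.add_apply, map_add, hf, hg]
        exact (LinearMap.congr_fun (map_add (tm F N) f g) x).symm
      | single q c =>
        rw [hth']
        induction c using TensorProduct.induction_on with
        | zero =>
          rw [map_zero, LinearMap.zero_apply, map_zero, Finsupp.single_zero]
          exact (LinearMap.congr_fun (map_zero (tm F N)) x).symm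
        | add c d hc hd =>
          rw [map_add, LinearMap.add_apply, map_add, hc, hd, Finsupp.single_add]
          exact (LinearMap.congr_fun (map_add (tm F N) _ _) x).symm
        | tmul a b =>
          rw [hth]
          simp only [r, LinearMap.comp_apply, mapB_mk, eps_mk, hrr]
          rw [← tm_bal, smul_tm]
          have : a • MulOpposite.op b.unop • o q
            = (show F from (Finsupp.single q (a ⊗ₜ b) : I →₀ (T ⊗[k] Tᵐᵒᵖ))) := by
            change ((a ⊗ₜ[k] (1 : Tᵐᵒᵖ)) • ((1 : T) ⊗ₜ[k] b) •
              (Finsupp.single q 1 : I →₀ (T ⊗[k] Tᵐᵒᵖ))) = Finsupp.single q (a ⊗ₜ b)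
            rw [Finsupp.smul_single, Finsupp.smul_single]; simp
          exact congrArg (fun z => tm F N z x) this
    have h2 : s (tm F N f x) = th' f x := tenLift_tm _ _ _ _
    rw [LinearMap.comp_apply, h2]
    exact this f
  exact Module.Projective.of_split ssl.toT rsl.toT
    (LinearMap.ext fun x => LinearMap.congr_fun hrs x)

theorem proj_ten (hP : Module.Projective (T ⊗[k] Tᵐᵒᵖ) P) (N : TMod k T) :
    Module.Projective T (Ten (bmod (k := k) (T := T) P) N) := by
  obtain ⟨s, r, sL, sR, rL, rR, hs⟩ := retr hP
  have := free_ten (k := k) (T := T) P N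
  have h : tmap rR IsSL.id ∘ₗ tmap sR (IsSL.id (M := N)) = LinearMap.id :=
    Ten_ext fun z x => by simp [hs]
  exact Module.Projective.of_split (tmap_sl sR sL IsSL.id).toT
    (tmap_sl rR rL IsSL.id).toT
    (LinearMap.ext fun x => LinearMap.congr_fun h x)

end
end
end TE

namespace TE

/-- iterated syzygy relation -/
def Syz (R : Type) [Ring R] : ℕ → ModuleCat.{0} R → ModuleCat.{0} R → Prop
  | 0, M, N => Nonempty (M ≃ₗ[R] N)
  | n + 1, M, N => ∃ P Y : ModuleCat.{0} R, Module.Projective R P ∧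
      ∃ (f : Y →ₗ[R] P) (g : P →ₗ[R] N), Function.Injective f ∧ Function.Surjective g ∧
        LinearMap.range f = LinearMap.ker g ∧ Syz R n M Y

section
variable {k T : Type} [Field k] [Ring T] [Algebra k T]

instance modkR (P : ModuleCat (T ⊗[k] Tᵐᵒᵖ)) : Module k P :=
  Module.compHom P (algebraMap k (T ⊗[k] Tᵐᵒᵖ))

instance towR (P : ModuleCat (T ⊗[k] Tᵐᵒᵖ)) :
    @IsScalarTower k (T ⊗[k] Tᵐᵒᵖ) P _ _ (modkR P).toSMul := by
  refine ⟨fun c r x => ?_⟩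
  change (c • r) • x = algebraMap k (T ⊗[k] Tᵐᵒᵖ) c • r • x
  rw [smul_smul]
  exact congrArg (· • x) (Algebra.smul_def c r)

noncomputable def bm (P : ModuleCat (T ⊗[k] Tᵐᵒᵖ)) : BMod k T := bmod (k := k) (T := T) P

theorem xp_syz {N0 : TMod k T} : ∀ (n i : ℕ) (M N : ModuleCat (T ⊗[k] Tᵐᵒᵖ)),
    Syz (T ⊗[k] Tᵐᵒᵖ) n M N → Nonempty (XP N0 i (bm N)) → Nonempty (XP N0 (i + n) (bm M))
  | 0, i, M, N, ⟨e⟩, ⟨x⟩ => xp_iso x (bmap (P := M) (Q := N) e.toLinearMap)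
      (bmap (P := N) (Q := M) e.symm.toLinearMap) (bmap_L _) (bmap_R _) (bmap_L _) (bmap_R _)
      (fun y => e.symm_apply_apply y)
  | n + 1, i, M, N, ⟨P, Y, hP, f, g, hf, hg, hfg, h⟩, ⟨x⟩ => by
    have S : Ses (bm Y) (bm P) (bm N) :=
      { ι := bmap (P := Y) (Q := P) f
        π := bmap (P := P) (Q := N) g
        ιL := bmap_L _
        ιR := bmap_R _
        πL := bmap_L _
        πR := bmap_R _
        inj := hf
        surj := hg
        zero := fun y => by
          have : f y ∈ LinearMap.ker g := by rw [← hfg]; exact LinearMap.mem_range_self f y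
          exact this
        ex := fun p hp => by
          have : p ∈ LinearMap.range f := by rw [hfg]; exact hp
          exact this }
    have h1 := xp_step x S (proj_right hP) (proj_ten hP N0)
    have h2 := xp_syz n (i + 1) M Y h h1
    have e : i + 1 + n = i + (n + 1) := by omega
    rwa [e] at h2

def toReg (k : Type) {T : Type} [Field k] [Ring T] [Algebra k T] (x : T) :
    regularBimodule k T := x
def unReg (x : regularBimodule k T) : T := x
def toTw (θ : T ≃ₐ[k] T) (x : T) : twistedBimodule k T θ := x
def unTw {θ : T ≃ₐ[k] T} (x : twistedBimodule k T θ) : T := x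

theorem reg_smul (a : T) (b : Tᵐᵒᵖ) (x : T) :
    (a ⊗ₜ[k] b : T ⊗[k] Tᵐᵒᵖ) • toReg k x = toReg k (a * x * b.unop) := by
  refine (TensorProduct.Algebra.smul_def (R := k) (A := T) (B := Tᵐᵒᵖ) (M := T) a b x).trans ?_
  exact (mul_assoc a x b.unop).symm

theorem tw_smul (θ : T ≃ₐ[k] T) (a : T) (b : Tᵐᵒᵖ) (x : T) :
    (a ⊗ₜ[k] b : T ⊗[k] Tᵐᵒᵖ) • toTw θ x = toTw θ (a * x * θ b.unop) := by
  refine (TensorProduct.Algebra.smul_def (R := k) (A := T) (B := Tᵐᵒᵖ) (M := T) a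
    (MulOpposite.op (θ b.unop)) x).trans ?_
  exact (mul_assoc a x (θ b.unop)).symm

theorem reg_ksmul (c : k) (x : T) : c • toReg k x = toReg k (c • x) := by
  refine (reg_smul (k := k) (algebraMap k T c) 1 x).trans ?_
  rw [MulOpposite.unop_one, mul_one, Algebra.smul_def]

theorem tw_ksmul (θ : T ≃ₐ[k] T) (c : k) (x : T) : c • toTw θ x = toTw θ (c • x) := by
  refine (tw_smul (k := k) θ (algebraMap k T c) 1 x).trans ?_
  rw [MulOpposite.unop_one, map_one, mul_one, Algebra.smul_def]

theorem xp_reg (N0 : TMod k T) : Nonempty (XP N0 0 (bm (regularBimodule k T))) := by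
  obtain ⟨x⟩ := xp_base N0
  refine xp_iso x
    (Y := bm (regularBimodule k T)) (Z := regB k T)
    { toFun := unReg (k := k) (T := T), map_add' := fun _ _ => rfl,
      map_smul' := fun c t => reg_ksmul c (unReg (k := k) (T := T) t) }
    { toFun := toReg k (T := T), map_add' := fun _ _ => rfl,
      map_smul' := fun c t => (reg_ksmul (T := T) c t).symm } ?_ ?_ ?_ ?_ (fun _ => rfl)
  · intro t x
    exact (reg_smul (k := k) t 1 (unReg (k := k) (T := T) x)).trans
      (congrArg (toReg k) (mul_one (t * unReg (k := k) (T := T) x)))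
  · intro b x
    exact (reg_smul (k := k) 1 b (unReg (k := k) (T := T) x)).trans
      (congrArg (fun z => toReg k (z * b.unop)) (one_mul (unReg (k := k) (T := T) x)))
  · intro t x
    exact ((reg_smul (k := k) t 1 x).trans
      (congrArg (toReg k) (mul_one (M := T) (t * (id x : T))))).symm
  · intro b x
    exact ((reg_smul (k := k) 1 b x).trans
      (congrArg (fun z => toReg k (z * b.unop)) (one_mul (M := T) x))).symm

theorem order_thm (G : Grad k T) {n : ℕ} (hn : 1 ≤ n) (θ : T ≃ₐ[k] T)
    (h : Syz (T ⊗[k] Tᵐᵒᵖ) n (twistedBimodule k T θ) (regularBimodule k T)) (c : T)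
    (hc : ∀ t, c * t = t * c) (hθ : ∀ t, θ.symm t = G.p0 t + c * G.E t) :
    c ^ (2 * n.factorial) • G.one0 = G.one0 := by
  obtain ⟨x⟩ : Nonempty (XP G.A0 n (bm (twistedBimodule k T θ))) := by
    have := xp_syz n 0 _ _ h (xp_reg G.A0)
    rwa [Nat.zero_add] at this
  obtain ⟨ζ, sl, nat, j, jsl, triv, -⟩ := x
  let σ : T →ₐ[k] T := θ.symm.toAlgHom
  let Z := bm (twistedBimodule k T θ)
  let tz : T → Z := toTw θ
  let uz : Z → T := unTw (k := k) (T := T) (θ := θ)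
  have hl : ∀ (t x : T), t • tz x = tz (t * x) := fun t x =>
    (tw_smul θ t 1 x).trans (congrArg tz (by rw [MulOpposite.unop_one, map_one, mul_one]))
  have hr : ∀ (t x : T), MulOpposite.op t • tz x = tz (x * θ t) := fun t x =>
    (tw_smul θ 1 (MulOpposite.op t) x).trans (congrArg tz (by rw [one_mul, MulOpposite.unop_op]))
  let zz : Z →ₗ[k] T :=
    { toFun := uz, map_add' := fun _ _ => rfl, map_smul' := fun c t => tw_ksmul θ c (uz t) }
  let ev0 : ∀ N : TMod k T, Z →ₗ[k] N →ₗ[k] N := fun N =>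
    (Algebra.lsmul k k N : T →ₐ[k] Module.End k N).toLinearMap ∘ₗ σ.toLinearMap ∘ₗ zz
  have hev0 : ∀ (N : TMod k T) (z : Z) (x : N), ev0 N z x = σ (uz z) • x := fun N z x => rfl
  let ev : ∀ N : TMod k T, Ten Z N →ₗ[k] N := fun N => tenLift (ev0 N) (fun b z x => by
    have h1 : ev0 N (MulOpposite.op b • z) x = σ (uz z * θ b) • x :=
      congrArg (fun z => ev0 N z x) (hr b (uz z))
    have h2 : σ (uz z * θ b) = σ (uz z) * b := by
      rw [map_mul]; congr 1; exact θ.symm_apply_apply b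
    rw [h1, h2, mul_smul]; rfl)
  have evtm : ∀ (N : TMod k T) (z : Z) (x : N), ev N (tm Z N z x) = σ (uz z) • x := fun N z x => tenLift_tm _ _ _ _
  have evsl : ∀ N, IsSL σ (ev N) := fun N => tenLift_sl fun t z x => by
    have h1 : ev0 N (t • z) x = σ (t * uz z) • x :=
      congrArg (fun z => ev0 N z x) (hl t (uz z))
    rw [h1, map_mul, mul_smul]; rfl
  have hσ : ∀ t, σ t = G.p0 t + c * G.E t := hθ
  let one : Z := tz 1
  have hE0 : ∀ t, G.E t • tm Z G.A0 one G.one0 = 0 := by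
    intro t
    rw [smul_tm]
    have h1 : G.E t • one = MulOpposite.op (σ (G.E t)) • one := by
      refine (hl _ 1).trans (Eq.trans ?_ (hr _ 1).symm)
      have : θ (σ (G.E t)) = G.E t := θ.apply_symm_apply _
      congr 1
      rw [this, one_mul, mul_one]
    rw [h1, tm_bal, hσ]
    have h2 : G.p0 (G.E t) = 0 := LinearMap.congr_fun G.p0_E t
    rw [h2, zero_add, mul_smul, G.E_smul_A0, smul_zero, map_zero]
  refine G.final hn hc (σ := σ) hσ (fun N => ev N ∘ₗ ζ N) (fun N => (evsl N).comp_id (sl N)) ?_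
    (j (tm Z G.A0 one G.one0)) ?_ ?_
  · intro M N f hf
    have h1 : f ∘ₗ ev M = ev N ∘ₗ tmap IsR.id hf := Ten_ext fun z x => by
      have e1 := evtm M z x
      have e2 := evtm N z (f x)
      rw [LinearMap.comp_apply, LinearMap.comp_apply, tmap_tm, LinearMap.id_apply]
      exact (congrArg f e1).trans ((hf _ _).trans e2.symm)
    rw [← LinearMap.comp_assoc, h1, LinearMap.comp_assoc, LinearMap.comp_assoc]
    exact congrArg _ (nat M N f hf)
  · intro t
    have h1 := jsl (G.E t) (tm Z G.A0 one G.one0)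
    refine h1.symm.trans ?_
    exact (congrArg j (hE0 t)).trans (map_zero j)
  · have h1 : Triv σ (ev G.A0 ∘ₗ (ζ G.A0 ∘ₗ j - LinearMap.id)) := triv.comp_left (evsl _)
    have h2 := G.kill (fun t x => G.E_smul_A0 t x) hσ h1 (tm Z G.A0 one G.one0) hE0
    rw [LinearMap.comp_apply, LinearMap.sub_apply, map_sub, sub_eq_zero] at h2
    refine h2.trans ?_
    refine (evtm _ one _).trans ?_
    change σ 1 • _ = _
    rw [map_one, one_smul]

end
end TE

namespace TE
section
variable {R : Type} [Ring R]

theorem syz_of_seq : ∀ (n : ℕ) (M N : ModuleCat.{0} R), HasProjExactSeq R M N n → Syz R n M N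
  | 0, M, N, ⟨P, d, e0, e1, _, hs, hi, _⟩ =>
    ⟨(e1.trans (LinearEquiv.ofBijective (d 0) ⟨hi, hs⟩)).trans e0⟩
  | n + 1, M, N, ⟨P, d, e0, e1, hp, hs, hi, hx⟩ => by
    let Y : ModuleCat.{0} R := ModuleCat.of R (LinearMap.ker (d 0))
    have hd1 : ∀ x, d 1 x ∈ LinearMap.ker (d 0) := fun x => by
      rw [← hx 0 (Nat.succ_pos n)]; exact LinearMap.mem_range_self _ _
    refine ⟨P 1, Y, hp 1 le_rfl (by omega), (LinearMap.ker (d 0)).subtype, e0.toLinearMap ∘ₗ d 0,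
      Subtype.val_injective, ?_, ?_, ?_⟩
    · exact e0.surjective.comp hs
    · rw [LinearEquiv.ker_comp]
      exact Submodule.range_subtype _
    · refine syz_of_seq n M Y ?_
      let P' : ℕ → ModuleCat.{0} R := fun i => match i with
        | 0 => Y
        | i + 1 => P (i + 2)
      let d0 : P 2 →ₗ[R] Y := (d 1).codRestrict (LinearMap.ker (d 0)) hd1
      let d' : ∀ i, P' (i + 1) →ₗ[R] P' i := fun i => match i with
        | 0 => d0
        | i + 1 => d (i + 2)
      refine ⟨P', d', LinearEquiv.refl R Y, e1, ?_, ?_, ?_, ?_⟩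
      · intro i h1 h2
        obtain ⟨i, rfl⟩ := Nat.exists_eq_add_of_le' h1
        exact hp (i + 2) (by omega) (by omega)
      · rintro ⟨y, hy⟩
        rw [← hx 0 (Nat.succ_pos n)] at hy
        obtain ⟨x, hx⟩ := hy
        exact ⟨x, Subtype.ext hx⟩
      · cases n with
        | zero => exact fun x y h => hi (congrArg Subtype.val h)
        | succ n => exact hi
      · intro i h
        cases i with
        | zero =>
          have h1 := hx 1 (by omega)
          have h2 : LinearMap.ker d0 = LinearMap.ker (d 1) := LinearMap.ker_codRestrict _ _ _
          exact h1.trans h2.symm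
        | succ i => exact hx (i + 2) (by omega)

theorem seq_of_syz : ∀ (n : ℕ) (M N : ModuleCat.{0} R), Syz R n M N → HasProjExactSeq R M N n
  | 0, M, N, ⟨e⟩ => by
    let P' : ℕ → ModuleCat.{0} R := fun _ => N
    exact ⟨P', fun _ => LinearMap.id, LinearEquiv.refl R N, e, fun i _ _ => by omega,
      Function.surjective_id, Function.injective_id, fun i h => by omega⟩
  | n + 1, M, N, ⟨P, Y, hP, f, g, hf, hg, hfg, h⟩ => by
    obtain ⟨Q, d, e0, e1, hp, hs, hi, hx⟩ := seq_of_syz n M Y h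
    let P' : ℕ → ModuleCat.{0} R := fun i => match i with
      | 0 => N
      | 1 => P
      | i + 2 => Q (i + 1)
    let d1 : Q 1 →ₗ[R] P := f ∘ₗ e0.toLinearMap ∘ₗ d 0
    have hrange : LinearMap.range d1 = LinearMap.range f := by
      rw [LinearMap.range_comp_of_range_eq_top]
      rw [LinearMap.range_eq_top]
      exact e0.surjective.comp hs
    have hker : LinearMap.ker d1 = LinearMap.ker (d 0) := by
      rw [LinearMap.ker_comp_of_ker_eq_bot _ (LinearMap.ker_eq_bot.mpr hf), LinearEquiv.ker_comp]
    let d' : ∀ i, P' (i + 1) →ₗ[R] P' i := fun i => match i with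
      | 0 => g
      | 1 => d1
      | i + 2 => d (i + 1)
    refine ⟨P', d', LinearEquiv.refl R N, e1, ?_, hg, ?_, ?_⟩
    · intro i h1 h2
      match i, h1, h2 with
      | 1, _, _ => exact hP
      | i + 2, _, h2 => exact hp (i + 1) (by omega) (by omega)
    · cases n with
      | zero => exact hf.comp (e0.injective.comp hi)
      | succ n => exact hi
    · intro i h
      match i, h with
      | 0, _ => exact hrange.trans hfg
      | 1, h => exact (hx 0 (by omega)).trans hker.symm
      | i + 2, h => exact hx (i + 1) (by omega)

theorem syz_congr_right {L M N : ModuleCat.{0} R} (e : M ≃ₗ[R] N) {m : ℕ} (h : Syz R m L M) :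
    Syz R m L N := by
  cases m with
  | zero => exact ⟨h.some.trans e⟩
  | succ m =>
    obtain ⟨P, Y, hP, f, g, hf, hg, hfg, h⟩ := h
    exact ⟨P, Y, hP, f, e.toLinearMap ∘ₗ g, hf, e.surjective.comp hg,
      by rw [LinearEquiv.ker_comp]; exact hfg, h⟩

theorem syz_congr_left {L M : ModuleCat.{0} R} (e : M ≃ₗ[R] L) : ∀ {m : ℕ} {N : ModuleCat.{0} R},
    Syz R m L N → Syz R m M N
  | 0, _, h => ⟨e.trans h.some⟩
  | _ + 1, _, ⟨P, Y, hP, f, g, hf, hg, hfg, h⟩ => ⟨P, Y, hP, f, g, hf, hg, hfg, syz_congr_left e h⟩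

theorem syz_trans {L M : ModuleCat.{0} R} {m : ℕ} (h : Syz R m L M) : ∀ {n : ℕ} {N : ModuleCat.{0} R},
    Syz R n M N → Syz R (n + m) L N
  | 0, N, h' => by rw [Nat.zero_add]; exact syz_congr_right h'.some h
  | n + 1, N, ⟨P, Y, hP, f, g, hf, hg, hfg, h'⟩ => by
    rw [Nat.add_right_comm]
    exact ⟨P, Y, hP, f, g, hf, hg, hfg, syz_trans h h'⟩

/-- restriction along a ring automorphism -/
def tws (ρ : R ≃+* R) (M : ModuleCat.{0} R) : ModuleCat.{0} R :=
  letI : Module R M := Module.compHom M ρ.toRingHom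
  ModuleCat.of R M

def tws_map (ρ : R ≃+* R) {M N : ModuleCat.{0} R} (f : M →ₗ[R] N) : tws ρ M →ₗ[R] tws ρ N where
  toFun := fun x => f x
  map_add' := fun x y => f.map_add x y
  map_smul' := fun r x => f.map_smul (ρ r) x

theorem syz_tws (ρ : R ≃+* R) : ∀ {n : ℕ} {M N : ModuleCat.{0} R}, Syz R n M N →
    Syz R n (tws ρ M) (tws ρ N)
  | 0, M, N, h => ⟨{ tws_map ρ h.some.toLinearMap with
      invFun := fun x => h.some.symm x
      left_inv := fun x => h.some.symm_apply_apply x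
      right_inv := fun x => h.some.apply_symm_apply x }⟩
  | n + 1, M, N, ⟨P, Y, hP, f, g, hf, hg, hfg, h⟩ => by
    refine ⟨tws ρ P, tws ρ Y, ?_, tws_map ρ f, tws_map ρ g, hf, hg, ?_, syz_tws ρ h⟩
    · let i1 : RingHomInvPair (RingHomClass.toRingHom ρ.symm) (RingHomClass.toRingHom ρ) :=
        ⟨RingHom.ext fun x => ρ.apply_symm_apply x, RingHom.ext fun x => ρ.symm_apply_apply x⟩
      let i2 : RingHomInvPair (RingHomClass.toRingHom ρ) (RingHomClass.toRingHom ρ.symm) :=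
        ⟨RingHom.ext fun x => ρ.symm_apply_apply x, RingHom.ext fun x => ρ.apply_symm_apply x⟩
      have e : P ≃ₛₗ[RingHomClass.toRingHom ρ.symm] (tws ρ P) :=
        { toFun := fun x => x
          invFun := fun x => x
          map_add' := fun _ _ => rfl
          map_smul' := fun r x => by
            have : r • x = (ρ (ρ.symm r)) • x := by rw [ρ.apply_symm_apply]
            exact this
          left_inv := fun _ => rfl
          right_inv := fun _ => rfl }
      exact Module.Projective.of_equiv e
    · have hfg' : ∀ x : P, x ∈ LinearMap.range f ↔ x ∈ LinearMap.ker g := fun x => by rw [hfg]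
      exact Submodule.ext fun x => hfg' x

/-- connections relative to a derivation -/
def HasConn (δ : R →+ R) (M : Type) [AddCommGroup M] [Module R M] : Prop :=
  ∃ D : M →+ M, ∀ (r : R) (m : M), D (r • m) = δ r • m + r • D m

theorem conn_proj {δ : R →+ R} (hδ : ∀ r s, δ (r * s) = δ r * s + r * δ s) (P : Type)
    [AddCommGroup P] [Module R P] (hP : Module.Projective R P) : HasConn δ P := by
  obtain ⟨s, hs⟩ := hP.out
  let DF : (P →₀ R) →+ (P →₀ R) := Finsupp.mapRange.addMonoidHom δ
  have hDF : ∀ (r : R) f, DF (r • f) = δ r • f + r • DF f := fun r f => Finsupp.ext fun i => by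
    simp [DF, hδ]
  refine ⟨((Finsupp.linearCombination R (id : P → P)).toAddMonoidHom.comp DF).comp
    s.toAddMonoidHom, fun r m => ?_⟩
  have := hs m
  simp only [AddMonoidHom.comp_apply, LinearMap.toAddMonoidHom_coe, map_smul, hDF, map_add, this]

theorem conn_ses {δ : R →+ R} {Y P N : Type} [AddCommGroup Y] [Module R Y]
    [AddCommGroup P] [Module R P] [AddCommGroup N] [Module R N] (hP : Module.Projective R P)
    (f : Y →ₗ[R] P) (g : P →ₗ[R] N) (hf : Function.Injective f) (hg : Function.Surjective g)
    (hfg : LinearMap.range f = LinearMap.ker g) (hc : HasConn δ P) (hN : HasConn δ N) :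
    HasConn δ Y := by
  obtain ⟨DP, hDP⟩ := hc
  obtain ⟨DN, hDN⟩ := hN
  let D : P →ₗ[R] N :=
    { toFun := fun p => g (DP p) - DN (g p)
      map_add' := fun x y => by simp only [map_add]; abel
      map_smul' := fun r x => by
        simp only [hDP, hDN, map_add, map_smul, RingHom.id_apply, smul_sub]; abel }
  obtain ⟨h, hh⟩ := Module.projective_lifting_property g D hg
  have hh' : ∀ p, g (h p) = g (DP p) - DN (g p) := fun p => LinearMap.congr_fun hh p
  have hgf : ∀ y, g (f y) = 0 := fun y => by
    have : f y ∈ LinearMap.ker g := by rw [← hfg]; exact LinearMap.mem_range_self f y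
    exact this
  have hex : ∀ y, ∃ y', f y' = DP (f y) - h (f y) := fun y => by
    have : DP (f y) - h (f y) ∈ LinearMap.range f := by
      rw [hfg, LinearMap.mem_ker, map_sub, hh', hgf, map_zero]; abel
    exact this
  choose D' hD' using hex
  refine ⟨{ toFun := D', map_zero' := hf (by rw [hD']; simp), map_add' := fun x y => hf ?_ },
    fun r m => hf ?_⟩
  · rw [map_add, hD', hD', hD']; simp only [map_add]; abel
  · change f (D' _) = f (_ + r • D' m)
    rw [f.map_add, f.map_smul, f.map_smul, hD', hD', f.map_smul, hDP, h.map_smul, smul_sub]; abel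

theorem conn_syz {δ : R →+ R} (hδ : ∀ r s, δ (r * s) = δ r * s + r * δ s) :
    ∀ {n : ℕ} {M N : ModuleCat.{0} R}, Syz R n M N → HasConn δ N → HasConn δ M
  | 0, M, N, h, ⟨D, hD⟩ => by
    obtain ⟨e⟩ := h
    refine ⟨(e.symm.toLinearMap.toAddMonoidHom.comp D).comp e.toLinearMap.toAddMonoidHom,
      fun r m => ?_⟩
    simp [hD]
  | n + 1, M, N, ⟨P, Y, hP, f, g, hf, hg, hfg, h⟩, hN =>
    conn_syz hδ h (conn_ses hP f g hf hg hfg (conn_proj hδ P hP) hN)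

end
end TE

namespace TE
section
variable {k T : Type} [Field k] [Ring T] [Algebra k T]

/-- building module isomorphisms from pure tensors -/
theorem mkEquiv {M N : ModuleCat.{0} (T ⊗[k] Tᵐᵒᵖ)} (e : M ≃+ N)
    (h : ∀ (a : T) (b : Tᵐᵒᵖ) (x : M),
      e ((a ⊗ₜ[k] b : T ⊗[k] Tᵐᵒᵖ) • x) = (a ⊗ₜ[k] b : T ⊗[k] Tᵐᵒᵖ) • e x) :
    Nonempty (M ≃ₗ[T ⊗[k] Tᵐᵒᵖ] N) := by
  refine ⟨{ e with map_smul' := fun r x => ?_ }⟩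
  change e (r • x) = r • e x
  induction r using TensorProduct.induction_on with
  | zero =>
    have h0 : (0 : T ⊗[k] Tᵐᵒᵖ) • x = 0 := zero_smul (T ⊗[k] Tᵐᵒᵖ) x
    have h1 : (0 : T ⊗[k] Tᵐᵒᵖ) • e x = 0 := zero_smul (T ⊗[k] Tᵐᵒᵖ) (e x)
    exact (congrArg e h0).trans ((map_zero e).trans h1.symm)
  | tmul a b => exact h a b x
  | add r s hr hs =>
    have h0 : (r + s) • x = r • x + s • x := add_smul r s x
    have h1 : (r + s) • e x = r • e x + s • e x := add_smul r s (e x)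
    rw [h0, h1, map_add, hr, hs]

noncomputable def rho (ψ : T ≃ₐ[k] T) : (T ⊗[k] Tᵐᵒᵖ) ≃+* (T ⊗[k] Tᵐᵒᵖ) :=
  (Algebra.TensorProduct.congr (AlgEquiv.refl : T ≃ₐ[k] T) (AlgEquiv.op ψ : Tᵐᵒᵖ ≃ₐ[k] Tᵐᵒᵖ)).toRingEquiv

theorem rho_tmul (ψ : T ≃ₐ[k] T) (a : T) (b : Tᵐᵒᵖ) :
    rho ψ (a ⊗ₜ[k] b) = a ⊗ₜ[k] MulOpposite.op (ψ b.unop) := rfl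

theorem tws_smul (ψ : T ≃ₐ[k] T) (M : ModuleCat.{0} (T ⊗[k] Tᵐᵒᵖ)) (a : T) (b : Tᵐᵒᵖ) (x : M) :
    ((a ⊗ₜ[k] b : T ⊗[k] Tᵐᵒᵖ) • (show tws (rho ψ) M from x)) =
      (show tws (rho ψ) M from (a ⊗ₜ[k] MulOpposite.op (ψ b.unop) : T ⊗[k] Tᵐᵒᵖ) • x) := rfl

theorem tws_reg (ψ : T ≃ₐ[k] T) :
    Nonempty (tws (rho ψ) (regularBimodule k T) ≃ₗ[T ⊗[k] Tᵐᵒᵖ] twistedBimodule k T ψ) := by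
  refine mkEquiv
    { toFun := fun x => toTw ψ (unReg (k := k) (T := T) x)
      invFun := fun x => toReg k (T := T) (unTw (k := k) (T := T) (θ := ψ) x)
      map_add' := fun _ _ => rfl
      left_inv := fun _ => rfl
      right_inv := fun _ => rfl } fun a b x => ?_
  refine Eq.trans ?_ (tw_smul ψ a b (unReg (k := k) (T := T) x)).symm
  exact reg_smul a (MulOpposite.op (ψ b.unop)) (unReg (k := k) (T := T) x)

theorem tws_tw (φ ψ : T ≃ₐ[k] T) :
    Nonempty (twistedBimodule k T (φ * ψ) ≃ₗ[T ⊗[k] Tᵐᵒᵖ]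
      tws (rho ψ) (twistedBimodule k T φ)) := by
  refine mkEquiv
    { toFun := fun x => toTw φ (unTw (k := k) (T := T) (θ := φ * ψ) x)
      invFun := fun x => toTw (φ * ψ) (unTw (k := k) (T := T) (θ := φ) x)
      map_add' := fun _ _ => rfl
      left_inv := fun _ => rfl
      right_inv := fun _ => rfl } fun a b x => ?_
  refine Eq.trans ?_ (tw_smul φ a (MulOpposite.op (ψ b.unop)) (unTw (k := k) (T := T) (θ := φ * ψ) x)).symm
  exact tw_smul (φ * ψ) a b (unTw (k := k) (T := T) (θ := φ * ψ) x)

theorem tw_inner (φ ψ : T ≃ₐ[k] T) (u : Tˣ) (h : ∀ b, ψ b * u = u * φ b) :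
    Nonempty (twistedBimodule k T ψ ≃ₗ[T ⊗[k] Tᵐᵒᵖ] twistedBimodule k T φ) := by
  refine mkEquiv
    { toFun := fun x => toTw φ (unTw (k := k) (T := T) (θ := ψ) x * u)
      invFun := fun x => toTw ψ (unTw (k := k) (T := T) (θ := φ) x * (u⁻¹ : Tˣ))
      map_add' := fun x y => add_mul (unTw (k := k) (T := T) (θ := ψ) x)
        (unTw (k := k) (T := T) (θ := ψ) y) _
      left_inv := fun x => Units.mul_inv_cancel_right (unTw (k := k) (T := T) (θ := ψ) x) u
      right_inv := fun x => Units.inv_mul_cancel_right (unTw (k := k) (T := T) (θ := φ) x) u }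
      fun a b x => ?_
  have key : ∀ y : T, (a * y * ψ b.unop) * u = a * (y * u) * φ b.unop := fun y => by
    rw [mul_assoc (a * y), h]; simp only [mul_assoc]
  refine Eq.trans ?_ (tw_smul φ a b (unTw (k := k) (T := T) (θ := ψ) x * u)).symm
  refine Eq.trans ?_ (congrArg (toTw φ) (key (unTw (k := k) (T := T) (θ := ψ) x)))
  exact congrArg (fun z => toTw φ (unTw (k := k) (T := T) (θ := ψ) z * u))
    (tw_smul ψ a b (unTw (k := k) (T := T) (θ := ψ) x))

theorem tw_refl :
    Nonempty (twistedBimodule k T AlgEquiv.refl ≃ₗ[T ⊗[k] Tᵐᵒᵖ] regularBimodule k T) := by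
  refine mkEquiv
    { toFun := fun x => toReg k (T := T) (unTw (k := k) (T := T) (θ := AlgEquiv.refl) x)
      invFun := fun x => toTw AlgEquiv.refl (unReg (k := k) (T := T) x)
      map_add' := fun _ _ => rfl
      left_inv := fun _ => rfl
      right_inv := fun _ => rfl } fun a b x => ?_
  refine Eq.trans ?_ (reg_smul a b (unTw (k := k) (T := T) (θ := AlgEquiv.refl) x)).symm
  exact tw_smul AlgEquiv.refl a b (unTw (k := k) (T := T) (θ := AlgEquiv.refl) x)

/-- a sequence of length `n` ending in the twist by `φ` -/
def SP (n : ℕ) (φ : T ≃ₐ[k] T) : Prop :=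
  1 ≤ n ∧ Syz (T ⊗[k] Tᵐᵒᵖ) n (twistedBimodule k T φ) (regularBimodule k T)

theorem SP.mul {n m : ℕ} {φ ψ : T ≃ₐ[k] T} (h : SP n φ) (h' : SP m ψ) : SP (m + n) (φ * ψ) := by
  refine ⟨by have := h.1; omega, ?_⟩
  have h1 := syz_tws (rho ψ) h.2
  exact syz_trans (syz_congr_left (tws_tw φ ψ).some (syz_congr_right (tws_reg ψ).some h1)) h'.2

theorem SP.pow {n : ℕ} {φ : T ≃ₐ[k] T} (h : SP n φ) : ∀ N : ℕ, SP ((N + 1) * n) (φ ^ (N + 1))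
  | 0 => by rw [Nat.zero_add, Nat.one_mul, pow_one]; exact h
  | N + 1 => by
    have := (SP.pow h N).mul h
    rw [← pow_succ] at this
    rw [Nat.succ_mul, Nat.add_comm]; exact this

theorem SP.pow' {n : ℕ} {φ : T ≃ₐ[k] T} (h : SP n φ) {N : ℕ} (hN : 1 ≤ N) :
    SP (N * n) (φ ^ N) := by
  obtain ⟨N, rfl⟩ := Nat.exists_eq_add_of_le' hN
  exact h.pow N

theorem SP.inner {n : ℕ} {φ ψ : T ≃ₐ[k] T} (h : SP n φ) (u : Tˣ) (hu : ∀ b, ψ b * u = u * φ b) :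
    SP n ψ := ⟨h.1, syz_congr_left (tw_inner φ ψ u hu).some h.2⟩

theorem periodic_of_SP {n : ℕ} (h : SP n (1 : T ≃ₐ[k] T)) : IsPeriodicAlgebra k T :=
  ⟨n, h.1, seq_of_syz n _ _ (syz_congr_left (tw_refl (k := k) (T := T)).some.symm h.2)⟩

theorem twisted_of_periodic (h : IsPeriodicAlgebra k T) : IsTwistedPeriodicAlgebra k T := by
  obtain ⟨n, hn, h⟩ := h
  exact ⟨n, AlgEquiv.refl, hn, seq_of_syz n _ _ (syz_congr_left (tw_refl (k := k) (T := T)).some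
    (syz_of_seq n _ _ h))⟩

theorem SP_of_twisted (h : IsTwistedPeriodicAlgebra k T) : ∃ n, ∃ φ : T ≃ₐ[k] T, SP n φ := by
  obtain ⟨n, φ, hn, h⟩ := h
  exact ⟨n, φ, hn, syz_of_seq n _ _ h⟩

noncomputable def dl (G : Grad k T) : (T ⊗[k] Tᵐᵒᵖ) →ₗ[k] (T ⊗[k] Tᵐᵒᵖ) :=
  TensorProduct.map G.E LinearMap.id + TensorProduct.map LinearMap.id
    ((MulOpposite.opLinearEquiv k).toLinearMap ∘ₗ G.E ∘ₗ (MulOpposite.opLinearEquiv k).symm.toLinearMap)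

theorem dl_tmul (G : Grad k T) (a : T) (b : Tᵐᵒᵖ) :
    dl G (a ⊗ₜ b) = G.E a ⊗ₜ b + a ⊗ₜ MulOpposite.op (G.E b.unop) := rfl

theorem dl_mul (G : Grad k T) (r s : T ⊗[k] Tᵐᵒᵖ) : dl G (r * s) = dl G r * s + r * dl G s := by
  induction r using TensorProduct.induction_on with
  | zero => simp
  | add r r' hr hr' => rw [add_mul, map_add, map_add, hr, hr', add_mul, add_mul]; abel
  | tmul a b =>
    induction s using TensorProduct.induction_on with
    | zero => simp
    | add r r' hr hr' => rw [mul_add, map_add, map_add, hr, hr', mul_add, mul_add]; abel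
    | tmul c d =>
      rw [Algebra.TensorProduct.tmul_mul_tmul, dl_tmul, dl_tmul, dl_tmul, MulOpposite.unop_mul,
        G.der, G.der, MulOpposite.op_add, MulOpposite.op_mul, MulOpposite.op_mul, MulOpposite.op_unop,
        MulOpposite.op_unop]
      simp only [add_mul, mul_add, TensorProduct.add_tmul, TensorProduct.tmul_add,
        Algebra.TensorProduct.tmul_mul_tmul]
      abel

theorem conn_reg (G : Grad k T) :
    HasConn (dl G).toAddMonoidHom (regularBimodule k T) := by
  let D : regularBimodule k T →+ regularBimodule k T :=
    { toFun := fun x => toReg k (T := T) (G.E (unReg (k := k) (T := T) x))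
      map_zero' := map_zero G.E
      map_add' := fun x y => map_add G.E (unReg (k := k) (T := T) x) (unReg (k := k) (T := T) y) }
  have hD : ∀ x : T, D (toReg k x) = toReg k (G.E x) := fun _ => rfl
  have hadd : ∀ x y : T, toReg k (x + y) = toReg k x + toReg k y := fun _ _ => rfl
  have key : ∀ (r : T ⊗[k] Tᵐᵒᵖ) (x : T),
      D (r • toReg k x) = dl G r • toReg k x + r • D (toReg k x) := by
    intro r x
    induction r using TensorProduct.induction_on with
    | zero =>
      have h0 : ∀ y : regularBimodule k T, (0 : T ⊗[k] Tᵐᵒᵖ) • y = 0 := fun y => zero_smul (T ⊗[k] Tᵐᵒᵖ) y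
      rw [map_zero, h0, h0, map_zero, add_zero]
    | add r s hr hs =>
      have h0 : ∀ (r s : T ⊗[k] Tᵐᵒᵖ) (y : regularBimodule k T), (r + s) • y = r • y + s • y :=
        fun r s y => add_smul r s y
      rw [h0, map_add, hr, hs, map_add, h0, h0]; abel
    | tmul a b =>
      have h0 : ∀ (r s : T ⊗[k] Tᵐᵒᵖ) (y : regularBimodule k T), (r + s) • y = r • y + s • y :=
        fun r s y => add_smul r s y
      rw [dl_tmul, h0, hD, reg_smul, reg_smul, reg_smul, reg_smul, hD, ← hadd, ← hadd]
      refine congrArg (toReg k) ?_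
      rw [G.der, G.der, MulOpposite.unop_op]
      simp only [add_mul]; abel
  exact ⟨D, fun r x => key r (unReg (k := k) (T := T) x)⟩

theorem SP.conn (G : Grad k T) {n : ℕ} {φ : T ≃ₐ[k] T} (h : SP n φ) :
    ∃ w : T, ∀ b, w * φ b + φ (G.E b) = G.E (φ b) + φ b * w := by
  obtain ⟨D, hD⟩ := conn_syz (δ := (dl G).toAddMonoidHom) (dl_mul G) h.2 (conn_reg G)
  have hD' : ∀ (r : T ⊗[k] Tᵐᵒᵖ) x, D (r • x) = dl G r • x + r • D x := hD
  obtain ⟨w, hw⟩ : ∃ w : T, D (toTw φ 1) = toTw φ w := ⟨D (toTw φ 1), rfl⟩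
  have hadd : ∀ x y : T, toTw φ (x + y) = toTw φ x + toTw φ y := fun _ _ => rfl
  have hinj : ∀ x y : T, toTw φ x = toTw φ y → x = y := fun _ _ h => h
  have hE1 : G.E 1 = 0 := by
    have := G.der 1 1
    simpa using this
  refine ⟨w, fun b => ?_⟩
  have h1 := hD' (φ b ⊗ₜ[k] (1 : Tᵐᵒᵖ)) (toTw φ 1)
  have h2 := hD' ((1 : T) ⊗ₜ[k] MulOpposite.op b) (toTw φ 1)
  have h3 : (φ b ⊗ₜ[k] (1 : Tᵐᵒᵖ)) • toTw φ 1 = ((1 : T) ⊗ₜ[k] MulOpposite.op b) • toTw φ 1 := by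
    rw [tw_smul, tw_smul]; simp
  rw [h3, h2, hw, dl_tmul, dl_tmul, MulOpposite.unop_one, hE1, MulOpposite.op_zero,
    TensorProduct.tmul_zero, TensorProduct.zero_tmul, add_zero, zero_add, MulOpposite.unop_op,
    tw_smul, tw_smul, tw_smul, tw_smul, ← hadd, ← hadd] at h1
  have h4 := hinj _ _ h1
  simp only [one_mul, mul_one, MulOpposite.unop_op, MulOpposite.unop_one, map_one] at h4
  rw [add_comm]; exact h4

end
end TE

namespace TE
section

theorem finite_roots {k Z : Type} [Field k] [CommRing Z] [Algebra k Z] [IsArtinianRing Z]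
    [IsReduced Z] (p : Polynomial k) (hp : p ≠ 0) : {z : Z | Polynomial.aeval z p = 0}.Finite := by
  let f : Z → ∀ m : MaximalSpectrum Z, Z ⧸ m.asIdeal := fun z m => Ideal.Quotient.mk m.asIdeal z
  have hf : Function.Injective f := by
    intro x y h
    have h1 : x - y ∈ Ring.jacobson Z := by
      rw [Ring.jacobson_eq_sInf_isMaximal, Submodule.mem_sInf]
      intro m hm
      exact Ideal.Quotient.eq.mp (congrFun h ⟨m, hm⟩)
    have h2 : IsNilpotent (x - y) := by
      obtain ⟨n, hn⟩ := IsArtinianRing.isNilpotent_jacobson_bot (R := Z)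
      refine ⟨n, ?_⟩
      have := Ideal.pow_mem_pow (Ideal.jacobson_bot (R := Z) ▸ h1) n
      rw [hn] at this
      exact this
    exact sub_eq_zero.mp h2.eq_zero
  refine Set.Finite.of_finite_image (f := f) (Set.Finite.subset (Set.Finite.pi
    (t := fun m : MaximalSpectrum Z => {y : Z ⧸ m.asIdeal | Polynomial.aeval y p = 0})
    fun m => ?_) ?_) hf.injOn
  · have := m.isMaximal
    have : IsDomain (Z ⧸ m.asIdeal) := inferInstance
    refine (Polynomial.rootSet_finite p (Z ⧸ m.asIdeal)).subset fun y hy => ?_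
    rw [Polynomial.mem_rootSet]
    exact ⟨hp, hy⟩
  · rintro _ ⟨z, hz, rfl⟩ m -
    change Polynomial.aeval (Ideal.Quotient.mkₐ k m.asIdeal z) p = 0
    rw [Polynomial.aeval_algHom_apply, show Polynomial.aeval z p = 0 from hz, map_zero]

theorem mem_jac {S : Type} [Ring S] (x : S) (h : ∀ y, IsNilpotent (y * x)) :
    x ∈ Ring.jacobson S := by
  rw [← Ideal.jacobson_bot, Ideal.mem_jacobson_iff]
  intro y
  obtain ⟨u, hu⟩ := (h y).isUnit_one_add
  refine ⟨(u⁻¹ : Sˣ), ?_⟩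
  have h1 : ((u⁻¹ : Sˣ) : S) * (1 + y * x) = 1 := by rw [← hu, Units.inv_mul]
  have h2 : ((u⁻¹ : Sˣ) : S) * y * x + (u⁻¹ : Sˣ) - 1 = 0 := by
    rw [← h1]; noncomm_ring
  rw [h2]; exact Submodule.zero_mem _

theorem central_roots_finite {k S : Type} [Field k] [Ring S] [Algebra k S] [FiniteDimensional k S]
    (hJ : Ring.jacobson S = ⊥) (p : Polynomial k) (hp : p ≠ 0) :
    {z : S | z ∈ Subalgebra.center k S ∧ Polynomial.aeval z p = 0}.Finite := by
  have : FiniteDimensional k (Subalgebra.center k S) :=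
    inferInstanceAs (FiniteDimensional k (Subalgebra.toSubmodule (Subalgebra.center k S)))
  have : IsArtinianRing (Subalgebra.center k S) := IsArtinianRing.of_finite k _
  have : IsReduced (Subalgebra.center k S) := by
    refine ⟨fun z ⟨n, hn⟩ => ?_⟩
    have h1 : (z : S) ∈ Ring.jacobson S := by
      refine mem_jac _ fun y => ⟨n, ?_⟩
      have hc : Commute y (z : S) := (Subalgebra.mem_center_iff.mp z.2 y)
      rw [hc.mul_pow]
      have : (z : S) ^ n = 0 := by
        have := congrArg (Subtype.val) hn
        simpa using this
      rw [this, mul_zero]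
    rw [hJ] at h1
    exact Subtype.ext h1
  have := (finite_roots (Z := Subalgebra.center k S) p hp).image (Subtype.val)
  refine this.subset ?_
  rintro z ⟨hz, h⟩
  refine ⟨⟨z, hz⟩, ?_, rfl⟩
  apply Subtype.ext
  change (Subalgebra.center k S).val (Polynomial.aeval _ p) = 0
  rw [← Polynomial.aeval_algHom_apply]
  exact h

/-- choice of the multiplier -/
theorem exists_mult {k V : Type} [Field k] [AddCommGroup V] [Module k V] [FiniteDimensional k V]
    (L : V →ₗ[k] V) : ∃ M : ℕ, 1 ≤ M ∧ ∀ x, x + (M : k) • L x = 0 → x = 0 := by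
  obtain ⟨p, hp⟩ := CharP.exists k
  by_cases h0 : p = 0
  · subst h0
    have : CharZero k := CharP.charP_to_charZero k
    have hfin := Module.End.finite_hasEigenvalue L
    have hinj : Function.Injective (fun n : ℕ => -((n + 1 : ℕ) : k)⁻¹) := by
      intro a b h
      have := inv_injective (neg_injective h)
      have := Nat.cast_injective this
      omega
    obtain ⟨n, hn⟩ := (hfin.preimage hinj.injOn).infinite_compl.nonempty
    refine ⟨n + 1, by omega, fun x hx => ?_⟩
    by_contra hne
    apply hn
    refine Module.End.hasEigenvalue_of_hasEigenvector (x := x) ⟨?_, hne⟩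
    rw [Module.End.mem_eigenspace_iff]
    have hM : ((n + 1 : ℕ) : k) ≠ 0 := Nat.cast_ne_zero.mpr (by omega)
    rw [neg_smul, eq_neg_iff_add_eq_zero]
    have := congrArg (fun y => ((n + 1 : ℕ) : k)⁻¹ • y) hx
    simp only [smul_add, smul_zero, smul_smul, inv_mul_cancel₀ hM, one_smul] at this
    rw [add_comm]; exact this
  · refine ⟨p, Nat.one_le_iff_ne_zero.mpr h0, fun x hx => ?_⟩
    rw [CharP.cast_eq_zero, zero_smul, add_zero] at hx
    exact hx

/-- the nilpotent induction -/
theorem nil_ind {k A : Type} [Field k] [Ring A] [Algebra k A] [FiniteDimensional k A]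
    (w j x : A) (M : ℕ) (hj : j ∈ Ring.jacobson A)
    (hM : ∀ x : A, x + (M : k) • (w * x - x * w) = 0 → x = 0)
    (hx : ((M : k) • w + j) * x - x * ((M : k) • w + j) = -x) : x = 0 := by
  have : IsArtinianRing A := IsArtinianRing.of_finite k A
  let F : A →ₗ[k] A := LinearMap.id + (M : k) • (LinearMap.mulLeft k w - LinearMap.mulRight k w)
  have hF : ∀ x, F x = x + (M : k) • (w * x - x * w) := fun _ => rfl
  have hFi : Function.Injective F := by
    rw [← LinearMap.ker_eq_bot, LinearMap.ker_eq_bot']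
    exact fun x h => hM x h
  have key : ∀ i : ℕ, x ∈ Ring.jacobson A ^ i := by
    intro i
    induction i with
    | zero => rw [Submodule.pow_zero, Ideal.one_eq_top]; exact Submodule.mem_top
    | succ i ih =>
      have h1 : F x = x * j - j * x := by
        rw [hF, smul_sub, ← sub_eq_zero]
        have : ((M : k) • w + j) * x - x * ((M : k) • w + j) + x = 0 := by rw [hx]; abel
        rw [← this]
        simp only [add_mul, mul_add, smul_mul_assoc, mul_smul_comm]; abel
      have h2 : F x ∈ Ring.jacobson A ^ (i + 1) := by
        rw [h1]
        refine sub_mem ?_ ?_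
        · rw [Submodule.pow_succ]; exact Ideal.mul_mem_mul ih hj
        · rw [Ideal.IsTwoSided.pow_succ]; exact Ideal.mul_mem_mul hj ih
      let Q : Submodule k A := (Ring.jacobson A ^ (i + 1)).restrictScalars k
      have hQ : ∀ y ∈ Q, F y ∈ Q := by
        intro y hy
        rw [hF]
        refine add_mem hy (Submodule.smul_mem _ _ (sub_mem ?_ ?_))
        · exact Ideal.mul_mem_left _ w hy
        · exact Ideal.mul_mem_right w _ hy
      have hsurj : Function.Surjective (F.restrict hQ) := by
        refine LinearMap.injective_iff_surjective.mp fun a b h => ?_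
        exact Subtype.ext (hFi (congrArg Subtype.val h))
      obtain ⟨y, hy⟩ := hsurj ⟨F x, h2⟩
      have : F y = F x := congrArg Subtype.val hy
      rw [← hFi this]
      exact y.2
  obtain ⟨n, hn⟩ := IsArtinianRing.isNilpotent_jacobson_bot (R := A)
  rw [Ideal.jacobson_bot] at hn
  have := key n
  rw [hn] at this
  exact this

end
end TE

section DualBimodule

variable (k A : Type) [Field k] [Ring A] [Algebra k A]

namespace TE
open TrivSqZeroExt

variable {k A}

theorem left_apply (a : A) (f : Module.Dual k A) (x : A) : (a • f) x = f (x * a) := rfl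
theorem right_apply (b : A) (f : Module.Dual k A) (x : A) :
    (MulOpposite.op b • f) x = f (b * x) := rfl

variable (k A) in
noncomputable def EE : TrivialExtension k A →ₗ[k] TrivialExtension k A :=
  (inrHom A (Module.Dual k A)).restrictScalars k ∘ₗ (sndHom A (Module.Dual k A)).restrictScalars k

theorem EE_apply (t : TrivialExtension k A) : EE k A t = inr t.snd := rfl

variable (k A) in
noncomputable def GG : Grad k (TrivialExtension k A) where
  E := EE k A
  idem t := rfl
  der s t := by
    simp only [EE_apply]
    ext <;> simp [add_comm]
  sq s t := by simp only [EE_apply]; rw [inr_mul_inr]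
  faith t h := by
    have h1 : t.fst = 0 := by
      by_contra hne
      obtain ⟨f, hf⟩ := (Module.forall_dual_apply_eq_zero_iff k t.fst).not.mpr hne |> not_forall.mp
      have h2 := congrArg TrivSqZeroExt.snd (h (inr f))
      have h3 := LinearMap.congr_fun h2 1
      simp only [EE_apply, snd_inr, snd_mul, fst_inr, zero_smul, zero_add, snd_zero] at h3
      rw [right_apply, mul_one] at h3
      exact hf h3
    rw [EE_apply]; ext
    · simp [h1]
    · simp

theorem GG_E (t : TrivialExtension k A) : (GG k A).E t = inr t.snd := rfl

/-- the commutator relation -/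
def Rel (φ : TrivialExtension k A ≃ₐ[k] TrivialExtension k A) (w : TrivialExtension k A) : Prop :=
  ∀ b, w * φ b + φ (inr b.snd) = inr (φ b).snd + φ b * w

theorem rel_pow {φ : TrivialExtension k A ≃ₐ[k] TrivialExtension k A} {w : TrivialExtension k A}
    (h : Rel φ w) : ∀ N : ℕ, Rel (φ ^ N) (∑ i ∈ Finset.range N, (φ ^ i) w)
  | 0 => fun b => by simp
  | N + 1 => fun b => by
    have h1 := rel_pow h N (φ b)
    have h2 := congrArg (φ ^ N) (h b)
    rw [map_add, map_add, map_mul, map_mul] at h2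
    have e : ∀ t, (φ ^ (N + 1)) t = (φ ^ N) (φ t) := fun t => by rw [pow_succ]; rfl
    rw [Finset.sum_range_succ, e, e, add_mul, mul_add]
    have h1' := eq_sub_of_add_eq h1.symm
    have h2' := eq_sub_of_add_eq h2.symm
    rw [h1', h2']; abel

variable [FiniteDimensional k A]

instance finT : FiniteDimensional k (TrivialExtension k A) :=
  inferInstanceAs (FiniteDimensional k (A × Module.Dual k A))

theorem memJT (t : TrivialExtension k A) (h : t.fst ∈ Ring.jacobson A) :
    t ∈ Ring.jacobson (TrivialExtension k A) := by
  have : IsArtinianRing A := IsArtinianRing.of_finite k A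
  refine mem_jac _ fun y => ?_
  obtain ⟨n, hn⟩ := IsArtinianRing.isNilpotent_jacobson_bot (R := A)
  rw [Ideal.jacobson_bot] at hn
  have h1 : (y * t).fst ∈ Ring.jacobson A := by
    rw [fst_mul]; exact Ideal.mul_mem_left _ _ h
  have h2 : ((y * t) ^ n).fst = 0 := by
    have := Ideal.pow_mem_pow h1 n
    rw [hn] at this
    rw [fst_pow]; exact this
  refine ⟨n + n, ?_⟩
  rw [pow_add]
  ext
  · rw [fst_mul, h2, zero_mul]; rfl
  · rw [snd_mul, h2]; simp

theorem stable (ψ : TrivialExtension k A ≃ₐ[k] TrivialExtension k A) (t : TrivialExtension k A)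
    (h : t.fst ∈ Ring.jacobson A) : (ψ t).fst ∈ Ring.jacobson A := by
  let π : TrivialExtension k A →+* A := (fstHom k A (Module.Dual k A)).toRingHom.comp
    (ψ : TrivialExtension k A →+* TrivialExtension k A)
  have hs : Function.Surjective π := fun a => ⟨ψ.symm (inl a), by
    change (ψ (ψ.symm (inl a))).fst = a
    rw [ψ.apply_symm_apply, fst_inl]⟩
  have : RingHomSurjective π := ⟨hs⟩
  exact Ring.le_comap_jacobson π (memJT t h)

theorem stable_inr (ψ : TrivialExtension k A ≃ₐ[k] TrivialExtension k A) (f : Module.Dual k A) :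
    (ψ (inr f)).fst ∈ Ring.jacobson A :=
  stable ψ _ (by rw [fst_inr]; exact Submodule.zero_mem _)

theorem rel_cent {φ : TrivialExtension k A ≃ₐ[k] TrivialExtension k A} {w : TrivialExtension k A}
    (h : Rel φ w) (i : ℕ) (t : TrivialExtension k A) :
    ((φ ^ i) w * t).fst - (t * (φ ^ i) w).fst ∈ Ring.jacobson A := by
  have h2 := congrArg (φ ^ i) (h (φ.symm ((φ ^ i).symm t)))
  rw [φ.apply_symm_apply, map_add, map_add, map_mul, map_mul, AlgEquiv.apply_symm_apply] at h2
  have h3 := congrArg TrivSqZeroExt.fst h2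
  rw [fst_add, fst_add] at h3
  rw [eq_sub_of_add_eq h3, add_sub_assoc, add_sub_assoc, add_comm, sub_add_eq_add_sub]
  have : ∀ x y z : A, x ∈ Ring.jacobson A → y ∈ Ring.jacobson A → z + (-y) + x - z ∈ Ring.jacobson A := by
    intro x y z hx hy
    have : z + (-y) + x - z = x - y := by abel
    rw [this]; exact sub_mem hx hy
  have e := this _ _ (t * (φ ^ i) w).fst (stable_inr (φ ^ i) (φ (φ.symm ((φ ^ i).symm t))).snd)
    (stable_inr (φ ^ i * φ) (φ.symm ((φ ^ i).symm t)).snd)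
  rw [φ.apply_symm_apply] at e
  convert e using 1
  change _ = _ + -((φ ^ i) (φ (inr _))).fst + _ - _
  abel

theorem rel_one {φ : TrivialExtension k A ≃ₐ[k] TrivialExtension k A} {w : TrivialExtension k A}
    (h : Rel φ w) : ∃ N, 1 ≤ N ∧ ∃ w', Rel (φ ^ N) w' ∧ ((φ ^ N) w' - w').fst ∈ Ring.jacobson A := by
  let π : TrivialExtension k A →ₐ[k] (A ⧸ Ring.jacobson A) :=
    (Ideal.Quotient.mkₐ k (Ring.jacobson A)).comp (fstHom k A (Module.Dual k A))
  have hπ : ∀ s t, π s = π t ↔ (s - t).fst ∈ Ring.jacobson A := fun s t => by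
    rw [fst_sub]; exact Ideal.Quotient.eq
  have hsurj : Function.Surjective π := fun s => by
    obtain ⟨a, rfl⟩ := Ideal.Quotient.mk_surjective s
    exact ⟨inl a, rfl⟩
  have hint : IsIntegral k w := IsIntegral.of_finite k w
  have hfin := central_roots_finite (k := k) (S := A ⧸ Ring.jacobson A)
    (Ring.jacobson_quotient_jacobson A) (minpoly k w) (minpoly.ne_zero hint)
  obtain ⟨i, j, hij, e⟩ := hfin.exists_lt_map_eq_of_forall_mem (f := fun i : ℕ => π ((φ ^ i) w))
    (fun i => by
      constructor
      · rw [Subalgebra.mem_center_iff]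
        intro s
        obtain ⟨t, rfl⟩ := hsurj s
        rw [← map_mul, ← map_mul, eq_comm, hπ, fst_sub]
        exact rel_cent h i t
      · change Polynomial.aeval ((π.comp (φ ^ i : TrivialExtension k A ≃ₐ[k] TrivialExtension k A).toAlgHom) w) _ = 0
        rw [Polynomial.aeval_algHom_apply, minpoly.aeval, map_zero])
  obtain ⟨N, rfl⟩ := Nat.exists_eq_add_of_le hij.le
  have hN : 1 ≤ N := by omega
  have hd : ((φ ^ N) w - w).fst ∈ Ring.jacobson A := by
    have h1 := (hπ _ _).mp e.symm
    have h2 := stable ((φ ^ i).symm) _ h1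
    rw [map_sub, AlgEquiv.symm_apply_apply, pow_add] at h2
    change ((φ ^ i).symm ((φ ^ i) ((φ ^ N) w)) - w).fst ∈ _ at h2
    rwa [AlgEquiv.symm_apply_apply] at h2
  refine ⟨N, hN, _, rel_pow h N, ?_⟩
  rw [map_sum, ← Finset.sum_sub_distrib]
  have : ∀ i, (φ ^ N) ((φ ^ i) w) - (φ ^ i) w = (φ ^ i) ((φ ^ N) w - w) := fun i => by
    rw [map_sub]
    change (φ ^ N * φ ^ i) w - _ = (φ ^ i * φ ^ N) w - _
    rw [← pow_add, ← pow_add, add_comm]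
  simp only [this]
  rw [fst_sum]
  exact sum_mem fun i _ => stable _ _ hd

theorem rel_two {φ : TrivialExtension k A ≃ₐ[k] TrivialExtension k A} {w : TrivialExtension k A}
    (h : Rel φ w) (hw : (φ w - w).fst ∈ Ring.jacobson A) :
    ∃ M, 1 ≤ M ∧ ∀ f, ((φ ^ M) (inr f)).fst = 0 := by
  obtain ⟨M, hM, hinj⟩ := exists_mult (k := k)
    (LinearMap.mulLeft k w.fst - LinearMap.mulRight k w.fst)
  refine ⟨M, hM, fun f => ?_⟩
  have h1 : ∀ i : ℕ, ((φ ^ i) w - w).fst ∈ Ring.jacobson A := by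
    intro i
    induction i with
    | zero => rw [pow_zero, AlgEquiv.one_apply, sub_self]; exact Submodule.zero_mem _
    | succ i ih =>
      have : (φ ^ (i + 1)) w - w = (φ ^ i) (φ w - w) + ((φ ^ i) w - w) := by
        rw [map_sub, pow_succ]; change (φ ^ i) (φ w) - w = _; abel
      rw [this, fst_add]
      exact add_mem (stable _ _ hw) ih
  have h2 : (∑ i ∈ Finset.range M, (φ ^ i) w).fst - (M : k) • w.fst ∈ Ring.jacobson A := by
    have : (∑ i ∈ Finset.range M, (φ ^ i) w).fst - (M : k) • w.fst
        = ∑ i ∈ Finset.range M, ((φ ^ i) w - w).fst := by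
      simp only [fst_sub]
      rw [Finset.sum_sub_distrib, fst_sum, Finset.sum_const, Finset.card_range, Nat.cast_smul_eq_nsmul]
    rw [this]; exact sum_mem fun i _ => h1 i
  have h3 := congrArg TrivSqZeroExt.fst (rel_pow h M (inr f))
  rw [snd_inr, fst_add, fst_add, fst_inr, zero_add, fst_mul, fst_mul] at h3
  refine nil_ind (k := k) w.fst _ _ M h2 hinj ?_
  rw [add_sub_cancel, ← h3]; abel

theorem step2 {n : ℕ} {φ : TrivialExtension k A ≃ₐ[k] TrivialExtension k A} (h : SP n φ) :
    ∃ n', ∃ ψ : TrivialExtension k A ≃ₐ[k] TrivialExtension k A, SP n' ψ ∧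
      ∀ f, (ψ (inr f)).fst = 0 := by
  obtain ⟨w, hw⟩ := h.conn (GG k A)
  obtain ⟨N, hN, w', hw', hc⟩ := rel_one (φ := φ) (w := w) hw
  obtain ⟨M, hM, hf⟩ := rel_two hw' hc
  exact ⟨_, _, (h.pow' hN).pow' hM, hf⟩

end TE
namespace TE
open TrivSqZeroExt

/-- twisting an automorphism by an inner one -/
def conj {k T : Type} [Field k] [Ring T] [Algebra k T] (u : Tˣ) (φ : T ≃ₐ[k] T) : T ≃ₐ[k] T :=
  AlgEquiv.ofAlgHom
    (AlgHom.ofLinearMap ((LinearMap.mulLeft k (u : T)) ∘ₗ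
        (LinearMap.mulRight k ((u⁻¹ : Tˣ) : T)) ∘ₗ φ.toLinearMap)
      (by simp) (fun x y => by
        simp only [LinearMap.comp_apply, LinearMap.mulLeft_apply, LinearMap.mulRight_apply,
          AlgEquiv.toLinearMap_apply, map_mul]
        simp only [mul_assoc, Units.inv_mul_cancel_left]))
    (AlgHom.ofLinearMap (φ.symm.toLinearMap ∘ₗ (LinearMap.mulLeft k ((u⁻¹ : Tˣ) : T)) ∘ₗ
        (LinearMap.mulRight k (u : T)))
      (by simp) (fun x y => by
        simp only [LinearMap.comp_apply, LinearMap.mulLeft_apply, LinearMap.mulRight_apply,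
          AlgEquiv.toLinearMap_apply]
        rw [← map_mul]
        simp only [mul_assoc, Units.mul_inv_cancel_left]))
    (by
      ext x
      change (u : T) * (φ (φ.symm ((u⁻¹ : Tˣ) * (x * u))) * (u⁻¹ : Tˣ)) = x
      rw [AlgEquiv.apply_symm_apply]; simp [mul_assoc])
    (by
      ext x
      change φ.symm ((u⁻¹ : Tˣ) * (((u : T) * (φ x * (u⁻¹ : Tˣ))) * u)) = x
      rw [AlgEquiv.symm_apply_eq]; simp [mul_assoc])

theorem conj_apply {k T : Type} [Field k] [Ring T] [Algebra k T] (u : Tˣ) (φ : T ≃ₐ[k] T) (b : T) :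
    conj u φ b = u * (φ b * (u⁻¹ : Tˣ)) := rfl

theorem SP.conj {k T : Type} [Field k] [Ring T] [Algebra k T] {n : ℕ} {φ : T ≃ₐ[k] T}
    (h : SP n φ) (u : Tˣ) : SP n (conj u φ) := by
  refine h.inner u fun b => ?_
  rw [conj_apply]; simp only [mul_assoc, Units.inv_mul, mul_one]

variable {k A}

noncomputable def unip (m : Module.Dual k A) : (TrivialExtension k A)ˣ where
  val := 1 - inr m
  inv := 1 + inr m
  val_inv := by rw [sub_mul, mul_add, mul_add, inr_mul_inr]; simp
  inv_val := by rw [add_mul, mul_sub, mul_sub, inr_mul_inr]; simp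

noncomputable def inlU (u : Aˣ) : (TrivialExtension k A)ˣ :=
  Units.map (inlAlgHom k A (Module.Dual k A)).toMonoidHom u

theorem inlU_val (u : Aˣ) : ((inlU u : (TrivialExtension k A)ˣ) : TrivialExtension k A) = inl (u : A) := rfl
theorem inlU_inv (u : Aˣ) : (((inlU u)⁻¹ : (TrivialExtension k A)ˣ) : TrivialExtension k A) = inl ((u⁻¹ : Aˣ) : A) := rfl

theorem eq_inr {t : TrivialExtension k A} (h : t.fst = 0) : t = inr t.snd := by
  ext
  · rw [h, fst_inr]
  · rw [snd_inr]

theorem eq_inl {t : TrivialExtension k A} (h : t.snd = 0) : t = inl t.fst := by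
  ext
  · rw [fst_inl]
  · rw [h, snd_inl]

theorem fst_surj {φ : TrivialExtension k A ≃ₐ[k] TrivialExtension k A}
    (hD : ∀ f, (φ (inr f)).fst = 0) (a : A) : ∃ b : A, (φ (inl b)).fst = a := by
  refine ⟨(φ.symm (inl a)).fst, ?_⟩
  have h := inl_fst_add_inr_snd_eq (φ.symm (inl a) : TrivialExtension k A)
  have h1 := congrArg (fun t => (φ t).fst) h
  simp only [map_add, fst_add, hD, add_zero, AlgEquiv.apply_symm_apply, fst_inl] at h1
  exact h1

theorem step3 [FiniteDimensional k A] {n : ℕ} {φ : TrivialExtension k A ≃ₐ[k] TrivialExtension k A}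
    (h : SP n φ) (hD : ∀ f, (φ (inr f)).fst = 0) :
    ∃ ψ : TrivialExtension k A ≃ₐ[k] TrivialExtension k A, SP n ψ ∧
      (∀ f, (ψ (inr f)).fst = 0) ∧ ∀ a, (ψ (inl a)).snd = 0 := by
  obtain ⟨w, hw⟩ := h.conn (GG k A)
  simp only [GG_E] at hw
  have hcen : ∀ a, w.fst * a = a * w.fst := by
    intro a
    obtain ⟨b, rfl⟩ := fst_surj hD a
    have := congrArg TrivSqZeroExt.fst (hw (inl b))
    simpa using this
  have hcen2 : ∀ g : Module.Dual k A, w.fst • g = MulOpposite.op w.fst • g := by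
    intro g; ext x
    rw [left_apply, right_apply, hcen]
  refine ⟨conj (unip w.snd) φ, h.conj _, fun f => ?_, fun a => ?_⟩
  · rw [conj_apply, fst_mul, fst_mul, hD, zero_mul, mul_zero]
  · have h1 := congrArg TrivSqZeroExt.snd (hw (inl a))
    simp only [snd_inl, inr_zero, map_zero, add_zero, snd_add, snd_mul, snd_inr, hcen2] at h1
    rw [conj_apply]
    change ((1 - inr w.snd) * (φ (inl a) * (1 + inr w.snd)) : TrivialExtension k A).snd = 0
    simp only [snd_mul, snd_sub, snd_add, snd_one, snd_inr, fst_sub, fst_one, fst_inr, fst_mul,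
      fst_add, sub_zero, add_zero, zero_add, mul_one, one_smul, zero_sub, MulOpposite.op_one]
    rw [← add_assoc, add_comm] at h1
    have h2 := add_right_cancel h1
    rw [smul_neg]
    rw [h2]
    abel

theorem step5 [FiniteDimensional k A] {θ : TrivialExtension k A ≃ₐ[k] TrivialExtension k A}
    (hD : ∀ f, (θ (inr f)).fst = 0) (hA : ∀ a, θ (inl a) = inl a) :
    ∃ c : A, (∀ x, c * x = x * c) ∧ ∀ f, θ (inr f) = inr (c • f) := by
  have e : ∀ f, θ (inr f) = inr (θ (inr f)).snd := fun f => eq_inr (hD f)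
  let lam : Module.Dual k (Module.Dual k A) :=
    { toFun := fun f => (θ (inr f)).snd 1
      map_add' := fun f g => by rw [inr_add, map_add, snd_add, LinearMap.add_apply]
      map_smul' := fun r f => by
        rw [inr_smul, map_smul, snd_smul, LinearMap.smul_apply, RingHom.id_apply] }
  obtain ⟨c, hc⟩ := (Module.evalEquiv k A).surjective lam
  have hc' : ∀ f, (θ (inr f)).snd 1 = f c := fun f => (LinearMap.congr_fun hc f).symm
  have hl : ∀ f x, (θ (inr f)).snd x = f (c * x) := by
    intro f x
    have h1 : θ (inr (x • f)) = inr (x • (θ (inr f)).snd) := by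
      rw [← inl_mul_inr, map_mul, hA, e f, inl_mul_inr, snd_inr]
    have h2 := hc' (x • f)
    rw [h1, snd_inr, left_apply, left_apply, one_mul] at h2
    exact h2
  have hr : ∀ f x, (θ (inr f)).snd x = f (x * c) := by
    intro f x
    have h1 : θ (inr (MulOpposite.op x • f)) = inr (MulOpposite.op x • (θ (inr f)).snd) := by
      rw [← inr_mul_inl, map_mul, hA, e f, inr_mul_inl, snd_inr]
    have h2 := hc' (MulOpposite.op x • f)
    rw [h1, snd_inr, right_apply, right_apply, mul_one] at h2
    exact h2
  refine ⟨c, fun x => ?_, fun f => ?_⟩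
  · rw [← sub_eq_zero, ← Module.forall_dual_apply_eq_zero_iff k]
    intro f
    rw [map_sub, ← hl, ← hr, sub_self]
  · rw [e f]
    congr 1
    ext x
    rw [hr, left_apply]

theorem step4 [FiniteDimensional k A]
    (hOut : ∃ S : Finset (A ≃ₐ[k] A), ∀ φ : A ≃ₐ[k] A, ∃ ψ ∈ S, ∃ u : Aˣ,
      ∀ a : A, φ a = ψ ((u : A) * a * ((u⁻¹ : Aˣ) : A)))
    {n : ℕ} {φ : TrivialExtension k A ≃ₐ[k] TrivialExtension k A}
    (h : SP n φ) (hD : ∀ f, (φ (inr f)).fst = 0) (hA : ∀ a, (φ (inl a)).snd = 0) :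
    ∃ n', ∃ θ : TrivialExtension k A ≃ₐ[k] TrivialExtension k A, SP n' θ ∧
      (∀ f, (θ (inr f)).fst = 0) ∧ ∀ a, θ (inl a) = inl a := by
  let φ0 : A ≃ₐ[k] A := AlgEquiv.ofBijective
    ((fstHom k A (Module.Dual k A)).comp (φ.toAlgHom.comp (inlAlgHom k A (Module.Dual k A))))
    ⟨fun a b hab => by
      have h1 : (φ (inl a)).fst = (φ (inl b)).fst := hab
      have h2 : φ (inl a) = φ (inl b) := by rw [eq_inl (hA a), eq_inl (hA b), h1]
      exact inl_injective (φ.injective h2), fun a => fst_surj hD a⟩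
  have h0 : ∀ a, φ (inl a) = inl (φ0 a) := fun a => eq_inl (hA a)
  have hpA : ∀ (i : ℕ) a, (φ ^ i) (inl a) = inl ((φ0 ^ i) a) := by
    intro i
    induction i with
    | zero => intro a; rfl
    | succ i ih => 
      intro a
      rw [pow_succ, pow_succ, AlgEquiv.mul_apply, AlgEquiv.mul_apply, h0, ih]
  have hpD : ∀ (i : ℕ) f, ((φ ^ i) (inr f)).fst = 0 := by
    intro i
    induction i with
    | zero => intro f; rfl
    | succ i ih =>
      intro f
      rw [pow_succ, AlgEquiv.mul_apply, eq_inr (hD f), ih]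
  obtain ⟨S, hS⟩ := hOut
  choose ψ hψ u hu using fun i : ℕ => hS (φ0 ^ i)
  obtain ⟨i, j, hij, e⟩ := S.finite_toSet.exists_lt_map_eq_of_forall_mem (f := ψ) hψ
  obtain ⟨N, rfl⟩ := Nat.exists_eq_add_of_le hij.le
  have hN : 1 ≤ N := by omega
  let z : Aˣ := (u i)⁻¹ * u (i + N)
  have hz : ∀ a, (φ0 ^ N) a = z * a * (z⁻¹ : Aˣ) := by
    intro a
    apply (φ0 ^ i).injective
    rw [← AlgEquiv.mul_apply, ← pow_add, hu (i + N), ← e, hu i]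
    congr 1
    simp only [z, mul_inv_rev, inv_inv, Units.val_mul, mul_assoc, Units.mul_inv_cancel_left,
      Units.mul_inv, mul_one]
  refine ⟨_, conj (inlU z⁻¹) (φ ^ N), (h.pow' hN).conj _, fun f => ?_, fun a => ?_⟩
  · rw [conj_apply, fst_mul, fst_mul, hpD, zero_mul, mul_zero]
  · rw [conj_apply, hpA, hz, inlU_val, inlU_inv, inv_inv, ← inl_mul, ← inl_mul]
    simp only [mul_assoc, Units.inv_mul_cancel_left, Units.inv_mul, mul_one]

theorem step6 [FiniteDimensional k A]
    {n : ℕ} {θ : TrivialExtension k A ≃ₐ[k] TrivialExtension k A}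
    (h : SP n θ) (hD : ∀ f, (θ (inr f)).fst = 0) (hA : ∀ a, θ (inl a) = inl a) :
    IsPeriodicAlgebra k (TrivialExtension k A) := by
  have hA' : ∀ a, θ.symm (inl a) = inl a := fun a => by
    rw [AlgEquiv.symm_apply_eq, hA]
  have hD' : ∀ f, (θ.symm (inr f)).fst = 0 := by
    intro f
    have h1 := congrArg θ (inl_fst_add_inr_snd_eq (θ.symm (inr f) : TrivialExtension k A))
    rw [map_add, hA, AlgEquiv.apply_symm_apply] at h1
    have h2 := congrArg TrivSqZeroExt.fst h1
    simpa [hD] using h2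
  obtain ⟨c, hc, hcf⟩ := step5 hD' hA'
  have hcen : ∀ t : TrivialExtension k A, inl c * t = t * inl c := by
    intro t
    ext x
    · simp [hc]
    · simp only [snd_mul, fst_inl, snd_inl, smul_zero, add_zero, zero_add]
      rw [left_apply, right_apply, hc]
  have ho := order_thm (GG k A) h.1 θ h.2 (inl c) hcen (fun t => by
    rw [Grad.p0_apply, GG_E, inl_mul_inr]
    have h1 := congrArg θ.symm (inl_fst_add_inr_snd_eq t)
    rw [← h1, map_add, hA', hcf]
    congr 1
    exact eq_sub_of_add_eq (inl_fst_add_inr_snd_eq t))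
  set m := 2 * n.factorial with hm
  have hm1 : 1 ≤ m := by have := n.factorial_pos; omega
  have h1 : ((inl c : TrivialExtension k A) ^ m - 1) • (GG k A).one0 = 0 := by
    rw [sub_smul, ho, one_smul, sub_self]
  rw [Grad.smul_one0_eq_zero, GG_E] at h1
  have hcm : c ^ m = 1 := by
    have h2 := congrArg TrivSqZeroExt.fst h1
    simp only [fst_inr, fst_sub, fst_pow, fst_inl, fst_one] at h2
    exact (sub_eq_zero.mp h2.symm)
  have hp : ∀ (i : ℕ) t, (θ.symm ^ i) t = inl t.fst + inr (c ^ i • t.snd) := by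
    intro i
    induction i with
    | zero => intro t; rw [pow_zero, pow_zero, one_smul, inl_fst_add_inr_snd_eq]; rfl
    | succ i ih =>
      intro t
      rw [pow_succ', AlgEquiv.mul_apply, ih, map_add, hA', hcf, smul_smul, pow_succ']
  have hone : θ ^ m = 1 := by
    have h2 : θ.symm ^ m = 1 := by
      ext1 t
      rw [hp, hcm, one_smul, inl_fst_add_inr_snd_eq]; rfl
    have h3 : (θ⁻¹) ^ m = 1 := h2
    rwa [inv_pow, inv_eq_one] at h3
  have h4 := h.pow' hm1
  rw [hone] at h4
  exact periodic_of_SP h4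

theorem mainT [FiniteDimensional k A]
    (hOut : ∃ S : Finset (A ≃ₐ[k] A), ∀ φ : A ≃ₐ[k] A, ∃ ψ ∈ S, ∃ u : Aˣ,
      ∀ a : A, φ a = ψ ((u : A) * a * ((u⁻¹ : Aˣ) : A))) :
    IsPeriodicAlgebra k (TrivialExtension k A) ↔
      IsTwistedPeriodicAlgebra k (TrivialExtension k A) := by
  refine ⟨twisted_of_periodic, fun h => ?_⟩
  obtain ⟨n, φ, h⟩ := SP_of_twisted h
  obtain ⟨n, φ, h, hD⟩ := step2 h
  obtain ⟨φ, h, hD, hA⟩ := step3 h hD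
  obtain ⟨n, φ, h, hD, hA⟩ := step4 hOut h hD hA
  exact step6 h hD hA

end TE
/-- Let `A` be a finite-dimensional `k`-algebra such that `A/rad A` is a
separable `k`-algebra. If the outer automorphism group `Out(A) = Aut_k(A)/Inn(A)` is finite
(i.e. finitely many automorphisms cover all of `Aut_k(A)` up to inner automorphisms), then
the trivial extension algebra `T(A)` is periodic if and only if it is twisted periodic. -/
theorem trivialExtension_periodic_iff_twistedPeriodic_of_finite_out
    [FiniteDimensional k A]
    (hsep : ∀ (S : Type) [Ring S] [Algebra k S] (π : A →ₐ[k] S),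
      Function.Surjective π → RingHom.ker π = Ideal.jacobson (⊥ : Ideal A) →
      ∀ (K : Type) [Field K] [Algebra k K], IsSemisimpleRing (K ⊗[k] S))
    (hOut : ∃ S : Finset (A ≃ₐ[k] A), ∀ φ : A ≃ₐ[k] A, ∃ ψ ∈ S, ∃ u : Aˣ,
      ∀ a : A, φ a = ψ ((u : A) * a * ((u⁻¹ : Aˣ) : A))) :
    IsPeriodicAlgebra k (TrivialExtension k A) ↔
      IsTwistedPeriodicAlgebra k (TrivialExtension k A) := by
  exact TE.mainT hOut

end DualBimodule
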